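/- For every ε > 0 there is a constant C_ε such that for every real number R > 1, the set A_R' = {ξ ∈ ℤ² : R ≤ |ξ| ≤ R + R^{-1/3}} of lattice points in the thin annulus of width R^{-1/3} satisfies E₃(A_R') ≤ C_ε · |A_R'|^{3+ε}. -/

import Mathlib

open MeasureTheory Real

noncomputable section

/-- The `k`-energy of a set `Λ`: the number of `2k`-tuples `(λ₁,…,λ₂ₖ) ∈ Λ^{2k}` with
`λ₁ + ⋯ + λ_k = λ_{k+1} + ⋯ + λ_{2k}`. -/
def energy {E : Type*} [AddCommMonoid E] (k : ℕ) (Λ : Set E) : ℕ :=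
  Nat.card {fg : (Fin k → E) × (Fin k → E) //
    (∀ i, fg.1 i ∈ Λ) ∧ (∀ i, fg.2 i ∈ Λ) ∧ ∑ i, fg.1 i = ∑ i, fg.2 i}

/-- The lattice points in the annulus `R ≤ |ξ| ≤ R + R^{-1/3}`. -/
def annulusLattice (R : ℝ) : Set (ℤ × ℤ) :=
  {ξ | R ≤ Real.sqrt ((ξ.1 : ℝ) ^ 2 + (ξ.2 : ℝ) ^ 2) ∧
    Real.sqrt ((ξ.1 : ℝ) ^ 2 + (ξ.2 : ℝ) ^ 2) ≤ R + R ^ (-(1 : ℝ) / 3)}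

/-!
The `3`-energy is a constant coefficient in the group algebra, so that splitting a set and applying
the Cauchy–Schwarz and Hölder inequalities bounds it by mixed energies of its parts. On a curved arc
two separated caps interact only through short pieces: in a solution of
`x + y₁ + y₂ = x' + y₃ + y₄` with all `yᵢ` in a cap of length `b`, the chord `x - x'` has length
`O(b ^ 2)` up to the separation, since it is parallel to that cap up to the sagitta of the cap,
whereas its own cap is transverse to that direction. Alternating between the two caps and inserting
at each round a decoupling inequality that is already known with a worse constant, one gains a power
of the scale (broad–narrow analysis), and halving the constant repeatedly yields
`E₃(A) ≤ C L ^ ε N ^ 3`, where `L` is the length of the arc in unit caps and `N` is the number of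
pairs of points of `A` in a common cap.

For `R = ρ ^ 3`, caps of length `ρ / 10` are so short that their lattice points are collinear, by
integrality of areas. Writing the points of a cap relative to its lowest point turns the count of
pairs into a divisor sum, whence `N = O(ρ ^ 2 log ρ)`. Conversely the annulus contains `≫ ρ ^ 2`
lattice points, since each primitive vector of length `≪ ρ` points nearly in the direction of one.
-/

open scoped AddMonoidAlgebra

section IndicatorSum

variable {G : Type*}

/-- The indicator function of a finite set, as an element of the group algebra. -/
def indicatorSum (A : Finset G) : ℝ[G] := ∑ a ∈ A, AddMonoidAlgebra.single a 1

lemma indicatorSum_add_indicatorSum_filter_not (A : Finset G) (p : G → Prop) [DecidablePred p] :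
    indicatorSum (A.filter p) + indicatorSum (A.filter fun x => ¬p x) = indicatorSum A :=
  Finset.sum_filter_add_sum_filter_not A p _

lemma indicatorSum_eq_sum_filter {ι : Type*} [DecidableEq ι] (A : Finset G) (c : G → ι) :
    indicatorSum A = ∑ i ∈ A.image c, indicatorSum (A.filter fun x => c x = i) :=
  (Finset.sum_fiberwise_of_maps_to (fun _ hx => Finset.mem_image_of_mem c hx) _).symm

lemma support_coeff_indicatorSum_subset (A : Finset G) : (indicatorSum A).coeff.support ⊆ A := by
  classical
  intro x hx
  rw [Finsupp.mem_support_iff, indicatorSum, AddMonoidAlgebra.coeff_sum,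
    Finsupp.finsetSum_apply] at hx
  obtain ⟨a, ha, hax⟩ := Finset.exists_ne_zero_of_sum_ne_zero hx
  rw [AddMonoidAlgebra.coeff_single] at hax
  obtain rfl : x = a := by
    by_contra h
    exact hax (Finsupp.single_eq_of_ne h)
  exact ha

end IndicatorSum

section GroupAlgebra

variable {G : Type*} [AddCommGroup G]

/-- The coefficient at `0` of an element of the group algebra. Solutions of additive equations are
counted by the constant coefficient of a product of indicators. -/
def constCoeff : ℝ[G] →+ ℝ where
  toFun F := F.coeff 0
  map_zero' := by simp
  map_add' F H := by simp

/-- The involution of the group algebra induced by `x ↦ -x`; it moves a summand to the other side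
of an additive equation. -/
def reflect : ℝ[G] →+* ℝ[G] :=
  AddMonoidAlgebra.mapDomainRingHom ℝ (negAddMonoidHom : G →+ G)

/-- The element of the group algebra whose coefficient at `d` is the number of representations
`d = a - a'` with `a, a' ∈ A`. -/
def diffRep (A : Finset G) : ℝ[G] := indicatorSum A * reflect (indicatorSum A)

/-- The `3`-energy of a finite set, as a real number. -/
def tripleEnergy (A : Finset G) : ℝ := constCoeff (diffRep A ^ 3)

/-- The mixed energy of `A` and `B`: the number of solutions of `a + b₁ + b₂ = a' + b₃ + b₄` with
`a, a' ∈ A` and `bᵢ ∈ B`. -/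
def mixedEnergy (A B : Finset G) : ℝ := constCoeff (diffRep A * diffRep B ^ 2)

@[simp]
lemma reflect_single (a : G) (r : ℝ) :
    reflect (AddMonoidAlgebra.single a r) = AddMonoidAlgebra.single (-a) r := by
  simp [reflect]

@[simp]
lemma reflect_reflect (F : ℝ[G]) : reflect (reflect F) = F := by
  induction F using AddMonoidAlgebra.induction_linear with
  | zero => simp
  | add f g hf hg => simp [hf, hg]
  | single a r => simp

@[simp]
lemma coeff_reflect (F : ℝ[G]) (a : G) : (reflect F).coeff a = F.coeff (-a) := by
  classical
  induction F using AddMonoidAlgebra.induction_linear with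
  | zero => simp
  | add f g hf hg => simp [hf, hg]
  | single b r => simp [Finsupp.single_apply, neg_eq_iff_eq_neg]

lemma constCoeff_apply (F : ℝ[G]) : constCoeff F = F.coeff 0 := rfl

lemma constCoeff_single [DecidableEq G] (a : G) (r : ℝ) :
    constCoeff (AddMonoidAlgebra.single a r) = if a = 0 then r else 0 := by
  simp [constCoeff_apply, Finsupp.single_apply]

lemma constCoeff_mul_reflect (F H : ℝ[G]) :
    constCoeff (F * reflect H) = F.coeff.sum fun a r => r * H.coeff a := by
  simp [constCoeff_apply, AddMonoidAlgebra.coeff_mul_apply_left]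

lemma constCoeff_mul_reflect_sq_le (F H : ℝ[G]) :
    constCoeff (F * reflect H) ^ 2 ≤
      constCoeff (F * reflect F) * constCoeff (H * reflect H) := by
  classical
  set s := F.coeff.support ∪ H.coeff.support
  have sum_eq (P Q : ℝ[G]) (hP : P.coeff.support ⊆ s) :
      constCoeff (P * reflect Q) = ∑ a ∈ s, P.coeff a * Q.coeff a := by
    rw [constCoeff_mul_reflect, Finsupp.sum_of_support_subset _ hP _ (by simp)]
  rw [sum_eq F H Finset.subset_union_left, sum_eq F F Finset.subset_union_left,
    sum_eq H H Finset.subset_union_right]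
  simpa only [pow_two] using
    Finset.sum_mul_sq_le_sq_mul_sq s (fun a => F.coeff a) (fun a => H.coeff a)

lemma constCoeff_sq_le_of_eq_mul_diffRep {P Q S : ℝ[G]} (F H : ℝ[G]) (Y : Finset G)
    (hP : P = F * reflect H * diffRep Y) (hQ : Q = F * reflect F * diffRep Y)
    (hS : S = H * reflect H * diffRep Y) :
    constCoeff P ^ 2 ≤ constCoeff Q * constCoeff S := by
  have factor (P Q : ℝ[G]) : P * reflect Q * diffRep Y =
      P * indicatorSum Y * reflect (Q * indicatorSum Y) := by
    simp only [diffRep, map_mul]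
    ring
  rw [hP, hQ, hS]
  simpa only [factor] using
    constCoeff_mul_reflect_sq_le (F * indicatorSum Y) (H * indicatorSum Y)

@[simp]
lemma reflect_diffRep (A : Finset G) : reflect (diffRep A) = diffRep A := by
  rw [diffRep, map_mul, reflect_reflect, mul_comm]

/-- The elements of the group algebra with nonnegative coefficients. -/
def nonnegCoeff (G : Type*) [AddCommGroup G] : Subsemiring ℝ[G] where
  carrier := {F | ∀ a, 0 ≤ F.coeff a}
  zero_mem' := by simp
  add_mem' hF hH a := by simpa using add_nonneg (hF a) (hH a)
  one_mem' a := by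
    classical
    rw [AddMonoidAlgebra.one_def, AddMonoidAlgebra.coeff_single, Finsupp.single_apply]
    split_ifs <;> norm_num
  mul_mem' {F H} hF hH a := by
    rw [AddMonoidAlgebra.coeff_mul_apply_left]
    exact Finset.sum_nonneg fun b _ => mul_nonneg (hF b) (hH _)

lemma constCoeff_nonneg {F : ℝ[G]} (hF : F ∈ nonnegCoeff G) : 0 ≤ constCoeff F := hF 0

lemma constCoeff_le_of_sub_mem {F H : ℝ[G]} (h : H - F ∈ nonnegCoeff G) :
    constCoeff F ≤ constCoeff H := by
  simpa using constCoeff_nonneg h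

lemma reflect_mem_nonnegCoeff {F : ℝ[G]} (hF : F ∈ nonnegCoeff G) :
    reflect F ∈ nonnegCoeff G := fun a => by simpa using hF (-a)

lemma indicatorSum_mem_nonnegCoeff (A : Finset G) : indicatorSum A ∈ nonnegCoeff G := by
  classical
  refine sum_mem fun a _ b => ?_
  rw [AddMonoidAlgebra.coeff_single, Finsupp.single_apply]
  split_ifs <;> norm_num

lemma diffRep_mem_nonnegCoeff (A : Finset G) : diffRep A ∈ nonnegCoeff G :=
  mul_mem (indicatorSum_mem_nonnegCoeff A)
    (reflect_mem_nonnegCoeff (indicatorSum_mem_nonnegCoeff A))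

open scoped Pointwise in
lemma constCoeff_cross_eq_zero [DecidableEq G] {X X' Y : Finset G}
    (h : Disjoint (X + (Y + Y)) (X' + (Y + Y))) :
    constCoeff (indicatorSum X * reflect (indicatorSum X') * diffRep Y ^ 2) = 0 := by
  set F := fun Z : Finset G => indicatorSum Z * (indicatorSum Y * indicatorSum Y) with hF
  have supp (Z : Finset G) : (F Z).coeff.support ⊆ Z + (Y + Y) :=
    (AddMonoidAlgebra.support_coeff_mul_subset _ _).trans <| Finset.add_subset_add
      (support_coeff_indicatorSum_subset Z) <|
      (AddMonoidAlgebra.support_coeff_mul_subset _ _).trans <| Finset.add_subset_add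
        (support_coeff_indicatorSum_subset Y) (support_coeff_indicatorSum_subset Y)
  have factor : indicatorSum X * reflect (indicatorSum X') * diffRep Y ^ 2 =
      F X * reflect (F X') := by
    simp only [hF, diffRep, map_mul]
    ring
  rw [factor, constCoeff_mul_reflect]
  refine Finset.sum_eq_zero fun a ha => ?_
  have : (F X').coeff a = 0 := by
    rw [← Finsupp.notMem_support_iff]
    exact fun ha' => Finset.disjoint_left.1 h (supp X ha) (supp X' ha')
  simp only [this, mul_zero]

end GroupAlgebra

section Energy

variable {G : Type*} [AddCommGroup G]

lemma indicatorSum_pow (A : Finset G) (k : ℕ) :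
    indicatorSum A ^ k = ∑ x ∈ Fintype.piFinset fun _ : Fin k => A,
      AddMonoidAlgebra.single (∑ i, x i) 1 := by
  classical
  have single_sum (x : Fin k → G) : ∏ i, AddMonoidAlgebra.single (x i) (1 : ℝ) =
      AddMonoidAlgebra.single (∑ i, x i) 1 := by simp
  simp only [← single_sum]
  rw [← Finset.prod_univ_sum (fun _ : Fin k => A) fun _ a => AddMonoidAlgebra.single a (1 : ℝ)]
  simp [indicatorSum]

lemma energy_coe_eq_card_filter [DecidableEq G] (A : Finset G) (k : ℕ) :
    energy k (A : Set G) =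
      (((Fintype.piFinset fun _ : Fin k => A) ×ˢ Fintype.piFinset fun _ : Fin k => A).filter
        fun p => ∑ i, p.1 i = ∑ i, p.2 i).card := by
  rw [energy, ← Nat.card_eq_finsetCard]
  refine Nat.card_congr (Equiv.subtypeEquivRight fun p => ?_)
  simp [Fintype.mem_piFinset, and_assoc]

lemma energy_coe_le_card_pow (A : Finset G) (k : ℕ) :
    energy k (A : Set G) ≤ A.card ^ (2 * k) := by
  classical
  rw [energy_coe_eq_card_filter]
  refine (Finset.card_filter_le _ _).trans_eq ?_
  simp [Finset.card_product, two_mul, pow_add]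

lemma constCoeff_diffRep_pow (A : Finset G) (k : ℕ) :
    constCoeff (diffRep A ^ k) = energy k (A : Set G) := by
  classical
  rw [energy_coe_eq_card_filter, Finset.card_filter, Finset.sum_product, diffRep, mul_pow,
    ← map_pow, indicatorSum_pow, map_sum, Finset.sum_mul_sum]
  simp [constCoeff_single, AddMonoidAlgebra.single_mul_single, ← sub_eq_add_neg, sub_eq_zero]

lemma tripleEnergy_eq_energy (A : Finset G) : tripleEnergy A = energy 3 (A : Set G) :=
  constCoeff_diffRep_pow A 3

lemma tripleEnergy_nonneg (A : Finset G) : 0 ≤ tripleEnergy A :=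
  constCoeff_nonneg (pow_mem (diffRep_mem_nonnegCoeff A) 3)

lemma tripleEnergy_le_card_pow (A : Finset G) : tripleEnergy A ≤ (A.card : ℝ) ^ 6 := by
  rw [tripleEnergy_eq_energy]
  exact_mod_cast energy_coe_le_card_pow A 3

lemma mixedEnergy_nonneg (A B : Finset G) : 0 ≤ mixedEnergy A B :=
  constCoeff_nonneg (mul_mem (diffRep_mem_nonnegCoeff A) (pow_mem (diffRep_mem_nonnegCoeff B) 2))

lemma mixedEnergy_sq_le (A B : Finset G) :
    mixedEnergy A B ^ 2 ≤ mixedEnergy B A * tripleEnergy B :=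
  constCoeff_sq_le_of_eq_mul_diffRep (diffRep A) (diffRep B) B
    (by rw [reflect_diffRep]; ring) (by rw [reflect_diffRep]; ring) (by rw [reflect_diffRep]; ring)

lemma mixedEnergy_pow_three_le (A B : Finset G) :
    mixedEnergy A B ^ 3 ≤ tripleEnergy A * tripleEnergy B ^ 2 := by
  rcases (mixedEnergy_nonneg A B).eq_or_lt with h0 | h0
  · rw [← h0, zero_pow three_ne_zero]
    exact mul_nonneg (tripleEnergy_nonneg A) (sq_nonneg _)
  refine le_of_mul_le_mul_left ?_ h0
  calc mixedEnergy A B * mixedEnergy A B ^ 3 = (mixedEnergy A B ^ 2) ^ 2 := by ring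
    _ ≤ (mixedEnergy B A * tripleEnergy B) ^ 2 := by
      gcongr
      exact mixedEnergy_sq_le A B
    _ = mixedEnergy B A ^ 2 * tripleEnergy B ^ 2 := by ring
    _ ≤ mixedEnergy A B * tripleEnergy A * tripleEnergy B ^ 2 := by
      gcongr
      exact mixedEnergy_sq_le B A
    _ = mixedEnergy A B * (tripleEnergy A * tripleEnergy B ^ 2) := by ring

lemma mixedEnergy_le_tripleEnergy {X A : Finset G} (h : X ⊆ A) :
    mixedEnergy X A ≤ tripleEnergy A := by
  classical
  obtain ⟨F, hF, hXF⟩ : ∃ F ∈ nonnegCoeff G, indicatorSum A = F + indicatorSum X :=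
    ⟨_, indicatorSum_mem_nonnegCoeff (A \ X), (Finset.sum_sdiff h).symm⟩
  have sub_eq : diffRep A ^ 3 - diffRep X * diffRep A ^ 2 =
      (F * reflect (indicatorSum A) + indicatorSum X * reflect F) * diffRep A ^ 2 := by
    simp only [diffRep, hXF, map_add]
    ring
  refine constCoeff_le_of_sub_mem ?_
  rw [sub_eq]
  exact mul_mem (add_mem
    (mul_mem hF (reflect_mem_nonnegCoeff (indicatorSum_mem_nonnegCoeff A)))
    (mul_mem (indicatorSum_mem_nonnegCoeff X) (reflect_mem_nonnegCoeff hF)))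
    (pow_mem (diffRep_mem_nonnegCoeff A) 2)

lemma constCoeff_diffRep_mul_tripleEnergy_sq_le {X A : Finset G} (h : X ⊆ A) (Y : Finset G) :
    (constCoeff (diffRep X * diffRep Y * diffRep A) * tripleEnergy A) ^ 2 ≤
      mixedEnergy X Y * tripleEnergy A ^ 3 := by
  have h_sq : constCoeff (diffRep X * diffRep Y * diffRep A) ^ 2 ≤
      mixedEnergy X Y * mixedEnergy X A :=
    constCoeff_sq_le_of_eq_mul_diffRep (diffRep Y) (diffRep A) X (by rw [reflect_diffRep]; ring)
      (by rw [reflect_diffRep]; ring) (by rw [reflect_diffRep]; ring)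
  have := mixedEnergy_nonneg X Y
  calc (constCoeff (diffRep X * diffRep Y * diffRep A) * tripleEnergy A) ^ 2
      = constCoeff (diffRep X * diffRep Y * diffRep A) ^ 2 * tripleEnergy A ^ 2 := by ring
    _ ≤ mixedEnergy X Y * tripleEnergy A * tripleEnergy A ^ 2 := by
      gcongr
      exact h_sq.trans (by gcongr; exact mixedEnergy_le_tripleEnergy h)
    _ = mixedEnergy X Y * tripleEnergy A ^ 3 := by ring

lemma constCoeff_same_side_pow_four_le {X A : Finset G} (h : X ⊆ A) (Y : Finset G) :
    constCoeff (indicatorSum X * indicatorSum Y *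
      (indicatorSum A * reflect (indicatorSum A) ^ 3)) ^ 4 ≤
      mixedEnergy X Y * tripleEnergy A ^ 3 := by
  refine le_trans ?_ (constCoeff_diffRep_mul_tripleEnergy_sq_le h Y)
  rw [show 4 = 2 * 2 from rfl, pow_mul]
  refine pow_le_pow_left₀ (sq_nonneg _)
    (constCoeff_sq_le_of_eq_mul_diffRep (indicatorSum X * indicatorSum Y)
      (indicatorSum A ^ 2) A ?_ ?_ ?_) 2
  all_goals
    simp only [diffRep, map_mul, map_pow]
    ring

lemma constCoeff_opposite_side_pow_four_le {X A : Finset G} (h : X ⊆ A) (Y : Finset G) :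
    constCoeff (indicatorSum X * reflect (indicatorSum Y) *
      (indicatorSum A ^ 2 * reflect (indicatorSum A) ^ 2)) ^ 4 ≤
      mixedEnergy X Y * tripleEnergy A ^ 3 := by
  refine le_trans ?_ (constCoeff_diffRep_mul_tripleEnergy_sq_le h Y)
  rw [show 4 = 2 * 2 from rfl, pow_mul]
  refine pow_le_pow_left₀ (sq_nonneg _)
    (constCoeff_sq_le_of_eq_mul_diffRep (indicatorSum X * reflect (indicatorSum Y))
      (diffRep A) A ?_ ?_ ?_) 2
  all_goals
    simp only [diffRep, map_mul, reflect_reflect]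
    ring

lemma constCoeff_cross_le (X X' Y : Finset G) :
    constCoeff (indicatorSum X * reflect (indicatorSum X') * diffRep Y ^ 2) ≤
      (mixedEnergy X Y + mixedEnergy X' Y) / 2 := by
  have h_sq : constCoeff (indicatorSum X * reflect (indicatorSum X') * diffRep Y ^ 2) ^ 2 ≤
      mixedEnergy X Y * mixedEnergy X' Y := by
    refine constCoeff_sq_le_of_eq_mul_diffRep (indicatorSum X * indicatorSum Y)
      (indicatorSum X' * indicatorSum Y) Y ?_ ?_ ?_ <;>
    · simp only [diffRep, map_mul]
      ring
  have hX := mixedEnergy_nonneg X Y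
  have hX' := mixedEnergy_nonneg X' Y
  refine (abs_le_of_sq_le_sq' (h_sq.trans ?_) (by positivity)).2
  linarith [sq_nonneg (mixedEnergy X Y - mixedEnergy X' Y)]

end Energy

section BroadNarrow

variable {G : Type*} [AddCommGroup G]

lemma constCoeff_broad_narrow_le {k u v w' v' : ℝ[G]} (hk : k ∈ nonnegCoeff G)
    (hu : u ∈ nonnegCoeff G) (hv : v ∈ nonnegCoeff G) (hw' : w' ∈ nonnegCoeff G)
    (hv' : v' ∈ nonnegCoeff G) :
    constCoeff (k * ((k + u + v) ^ 2 * (w' + v') ^ 3)) ≤ constCoeff ((k + u) ^ 3 * w' ^ 3) +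
      2 * constCoeff (k * v * ((k + u + v) * (w' + v') ^ 3)) +
      3 * constCoeff (k * v' * ((k + u + v) ^ 2 * (w' + v') ^ 2)) := by
  have excess : (k + u) ^ 3 * w' ^ 3 + 2 • (k * v * ((k + u + v) * (w' + v') ^ 3)) +
      3 • (k * v' * ((k + u + v) ^ 2 * (w' + v') ^ 2)) -
      k * ((k + u + v) ^ 2 * (w' + v') ^ 3) =
      u * (k + u) ^ 2 * w' ^ 3 + k * v ^ 2 * (w' + v') ^ 3 +
        3 * (k * v' * v * (2 * (k + u) + v) * (w' + v') ^ 2) +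
        k * (k + u) ^ 2 * v' ^ 2 * (3 * w' + 2 * v') := by
    ring
  have h := constCoeff_le_of_sub_mem
    (F := k * ((k + u + v) ^ 2 * (w' + v') ^ 3))
    (H := (k + u) ^ 3 * w' ^ 3 + 2 • (k * v * ((k + u + v) * (w' + v') ^ 3)) +
      3 • (k * v' * ((k + u + v) ^ 2 * (w' + v') ^ 2))) (by
    rw [excess]
    have two_mem : (2 : ℝ[G]) ∈ nonnegCoeff G := ofNat_mem _ 2
    have three_mem : (3 : ℝ[G]) ∈ nonnegCoeff G := ofNat_mem _ 3
    have hku := pow_mem (add_mem hk hu) 2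
    have hwv := add_mem hw' hv'
    exact add_mem (add_mem (add_mem (mul_mem (mul_mem hu hku) (pow_mem hw' 3))
      (mul_mem (mul_mem hk (pow_mem hv 2)) (pow_mem hwv 3)))
      (mul_mem three_mem (mul_mem (mul_mem (mul_mem (mul_mem hk hv') hv)
        (add_mem (mul_mem two_mem (add_mem hk hu)) hv)) (pow_mem hwv 2))))
      (mul_mem (mul_mem (mul_mem hk hku) (pow_mem hv' 2))
        (add_mem (mul_mem three_mem hw') (mul_mem two_mem hv'))))
  rw [map_add, map_add, map_nsmul, map_nsmul] at h
  simpa only [nsmul_eq_mul, Nat.cast_ofNat] using h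

lemma constCoeff_mul_indicatorSum_mul {ι : Type*} [DecidableEq ι] (F H : ℝ[G]) (V : Finset G)
    (κ : G → ι) :
    constCoeff (F * indicatorSum V * H) =
      ∑ j ∈ V.image κ, constCoeff (F * indicatorSum (V.filter fun x => κ x = j) * H) := by
  rw [indicatorSum_eq_sum_filter V κ, Finset.mul_sum, Finset.sum_mul, map_sum]

lemma constCoeff_mul_reflect_indicatorSum_mul {ι : Type*} [DecidableEq ι] (F H : ℝ[G])
    (V : Finset G) (κ : G → ι) :
    constCoeff (F * reflect (indicatorSum V) * H) = ∑ j ∈ V.image κ,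
      constCoeff (F * reflect (indicatorSum (V.filter fun x => κ x = j)) * H) := by
  rw [indicatorSum_eq_sum_filter V κ, map_sum, Finset.mul_sum, Finset.sum_mul, map_sum]

lemma sum_le_mul_of_pow_four_le {ι : Type*} {s : Finset ι} {f : ι → ℝ} {M B : ℝ}
    (hs : s.card ≤ M) (hB : 0 ≤ B) (h : ∀ i ∈ s, f i ^ 4 ≤ B ^ 4) : ∑ i ∈ s, f i ≤ M * B :=
  calc ∑ i ∈ s, f i ≤ ∑ _i ∈ s, B :=
        Finset.sum_le_sum fun i hi => le_of_pow_le_pow_left₀ four_ne_zero hB (h i hi)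
    _ = s.card * B := by rw [Finset.sum_const, nsmul_eq_mul]
    _ ≤ M * B := by gcongr

/-- One of the six variables lies in the cell `c = k`. Unless all the others are confined to the
neighbouring cells, one of them is far away and the bilinear bound `hN` applies. -/
lemma constCoeff_filter_eq_le {A : Finset G} {c κ : G → ℤ} {M B : ℝ} {k : ℤ} (hB : 0 ≤ B)
    (hM : (A.image κ).card ≤ M)
    (hN : ∀ j, mixedEnergy (A.filter fun x => c x = k)
      ((A.filter fun x => ¬|c x - k| ≤ 1).filter fun x => κ x = j) * tripleEnergy A ^ 3 ≤ B ^ 4) :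
    constCoeff (indicatorSum (A.filter fun x => c x = k) *
      (indicatorSum A ^ 2 * reflect (indicatorSum A) ^ 3)) ≤
      tripleEnergy (A.filter fun x => |c x - k| ≤ 1) + 5 * (M * B) := by
  classical
  set X := A.filter fun x => c x = k with hX
  set W := A.filter fun x => |c x - k| ≤ 1 with hW
  set V := A.filter fun x => ¬|c x - k| ≤ 1
  have hXA : X ⊆ A := Finset.filter_subset _ _
  have hXW : X ⊆ W := fun x hx => by
    simp only [hX, hW, Finset.mem_filter] at hx ⊢
    simp [hx.1, hx.2]
  have hW_split : indicatorSum X + indicatorSum (W \ X) = indicatorSum W := by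
    rw [add_comm]
    exact Finset.sum_sdiff hXW
  have hA_split : indicatorSum W + indicatorSum V = indicatorSum A :=
    indicatorSum_add_indicatorSum_filter_not A _
  have hMV : (V.image κ).card ≤ M := le_trans (by
    exact_mod_cast Finset.card_le_card (Finset.image_subset_image (Finset.filter_subset _ A))) hM
  have same_side : constCoeff (indicatorSum X * indicatorSum V *
      (indicatorSum A * reflect (indicatorSum A) ^ 3)) ≤ M * B := by
    rw [constCoeff_mul_indicatorSum_mul _ _ V κ]
    exact sum_le_mul_of_pow_four_le hMV hB fun j _ =>
      (constCoeff_same_side_pow_four_le hXA _).trans (hN j)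
  have opposite_side : constCoeff (indicatorSum X * reflect (indicatorSum V) *
      (indicatorSum A ^ 2 * reflect (indicatorSum A) ^ 2)) ≤ M * B := by
    rw [constCoeff_mul_reflect_indicatorSum_mul _ _ V κ]
    exact sum_le_mul_of_pow_four_le hMV hB fun j _ =>
      (constCoeff_opposite_side_pow_four_le hXA _).trans (hN j)
  have h := constCoeff_broad_narrow_le (indicatorSum_mem_nonnegCoeff X)
    (indicatorSum_mem_nonnegCoeff (W \ X)) (indicatorSum_mem_nonnegCoeff V)
    (reflect_mem_nonnegCoeff (indicatorSum_mem_nonnegCoeff W))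
    (reflect_mem_nonnegCoeff (indicatorSum_mem_nonnegCoeff V))
  rw [hW_split, ← map_add, hA_split, ← mul_pow, ← diffRep, ← tripleEnergy] at h
  linarith

lemma tripleEnergy_le_sum_window_add {A : Finset G} {c κ : G → ℤ} {M B : ℝ} (hB : 0 ≤ B)
    (hc : (A.image c).card ≤ M) (hκ : (A.image κ).card ≤ M)
    (hN : ∀ k j, mixedEnergy (A.filter fun x => c x = k)
      ((A.filter fun x => ¬|c x - k| ≤ 1).filter fun x => κ x = j) * tripleEnergy A ^ 3 ≤ B ^ 4) :
    tripleEnergy A ≤ ∑ k ∈ A.image c, tripleEnergy (A.filter fun x => |c x - k| ≤ 1) +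
      5 * M ^ 2 * B := by
  have hM : 0 ≤ M := le_trans (by positivity) hc
  have split : diffRep A ^ 3 = ∑ k ∈ A.image c, indicatorSum (A.filter fun x => c x = k) *
      (indicatorSum A ^ 2 * reflect (indicatorSum A) ^ 3) := by
    rw [← Finset.sum_mul, ← indicatorSum_eq_sum_filter, diffRep]
    ring
  calc tripleEnergy A
      ≤ ∑ k ∈ A.image c, (tripleEnergy (A.filter fun x => |c x - k| ≤ 1) + 5 * (M * B)) := by
        rw [tripleEnergy, split, map_sum]
        exact Finset.sum_le_sum fun k _ => constCoeff_filter_eq_le hB hκ (hN k)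
    _ = ∑ k ∈ A.image c, tripleEnergy (A.filter fun x => |c x - k| ≤ 1) +
        (A.image c).card * (5 * (M * B)) := by
        rw [Finset.sum_add_distrib, Finset.sum_const, nsmul_eq_mul]
    _ ≤ ∑ k ∈ A.image c, tripleEnergy (A.filter fun x => |c x - k| ≤ 1) + M * (5 * (M * B)) := by
        gcongr
    _ = _ := by ring

lemma card_le_of_forall_abs_sub_le {s : Finset ℤ} {k : ℤ} {m : ℕ} (h : ∀ i ∈ s, |i - k| ≤ m) :
    s.card ≤ 2 * m + 1 := by
  have hs : s ⊆ Finset.Icc (k - m) (k + m) := fun i hi => by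
    have := abs_le.1 (h i hi)
    rw [Finset.mem_Icc]
    omega
  have := Finset.card_le_card hs
  rw [Int.card_Icc] at this
  omega

lemma sum_sum_le_of_near_diagonal {s : Finset ℤ} {m : ℤ → ℝ} {f : ℤ → ℤ → ℝ} (hm : ∀ i, 0 ≤ m i)
    (hnear : ∀ i j, |i - j| ≤ 1 → f i j ≤ (m i + m j) / 2)
    (hfar : ∀ i j, ¬|i - j| ≤ 1 → f i j ≤ 0) :
    ∑ i ∈ s, ∑ j ∈ s, f i j ≤ 3 * ∑ i ∈ s, m i := by
  have f_le (i j : ℤ) : f i j ≤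
      (if |i - j| ≤ 1 then m i / 2 else 0) + if |j - i| ≤ 1 then m j / 2 else 0 := by
    rw [abs_sub_comm j i]
    split_ifs with hij
    · linarith [hnear i j hij]
    · simpa using hfar i j hij
  have row_le (i : ℤ) : ∑ j ∈ s, (if |i - j| ≤ 1 then m i / 2 else 0) ≤ 3 * (m i / 2) := by
    rw [← Finset.sum_filter, Finset.sum_const, nsmul_eq_mul]
    have hcard : (s.filter fun j => |i - j| ≤ 1).card ≤ 2 * 1 + 1 :=
      card_le_of_forall_abs_sub_le (k := i) fun j hj => by
        rw [abs_sub_comm]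
        exact (Finset.mem_filter.1 hj).2
    have := hm i
    gcongr
    exact_mod_cast hcard
  calc ∑ i ∈ s, ∑ j ∈ s, f i j
      ≤ ∑ i ∈ s, ∑ j ∈ s, ((if |i - j| ≤ 1 then m i / 2 else 0) +
          if |j - i| ≤ 1 then m j / 2 else 0) :=
        Finset.sum_le_sum fun i _ => Finset.sum_le_sum fun j _ => f_le i j
    _ = ∑ i ∈ s, ∑ j ∈ s, (if |i - j| ≤ 1 then m i / 2 else 0) +
        ∑ j ∈ s, ∑ i ∈ s, (if |j - i| ≤ 1 then m j / 2 else 0) := by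
        simp only [Finset.sum_add_distrib]
        congr 1
        exact Finset.sum_comm
    _ ≤ ∑ i ∈ s, 3 * (m i / 2) + ∑ j ∈ s, 3 * (m j / 2) :=
        add_le_add (Finset.sum_le_sum fun i _ => row_le i) (Finset.sum_le_sum fun j _ => row_le j)
    _ = 3 * ∑ i ∈ s, m i := by
        rw [← Finset.sum_add_distrib, Finset.mul_sum]
        exact Finset.sum_congr rfl fun i _ => by ring

lemma mixedEnergy_le_three_mul_sum {X Y : Finset G} (κ : G → ℤ)
    (h : ∀ x ∈ X, ∀ x' ∈ X, ∀ y₁ ∈ Y, ∀ y₂ ∈ Y, ∀ y₃ ∈ Y, ∀ y₄ ∈ Y,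
      x + (y₁ + y₂) = x' + (y₃ + y₄) → |κ x - κ x'| ≤ 1) :
    mixedEnergy X Y ≤ 3 * ∑ i ∈ X.image κ, mixedEnergy (X.filter fun x => κ x = i) Y := by
  classical
  have split : diffRep X * diffRep Y ^ 2 = ∑ i ∈ X.image κ, ∑ j ∈ X.image κ,
      indicatorSum (X.filter fun x => κ x = i) *
        reflect (indicatorSum (X.filter fun x => κ x = j)) * diffRep Y ^ 2 := by
    simp only [← Finset.sum_mul, ← Finset.sum_mul_sum, ← map_sum, ← indicatorSum_eq_sum_filter]
    rfl
  rw [mixedEnergy, split, map_sum]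
  simp only [map_sum]
  refine sum_sum_le_of_near_diagonal (fun i => mixedEnergy_nonneg _ Y)
    (fun i j _ => constCoeff_cross_le _ _ Y)
    fun i j hij => (constCoeff_cross_eq_zero (Finset.disjoint_left.2 ?_)).le
  simp only [Finset.mem_add, Finset.mem_filter]
  rintro _ ⟨x, ⟨hx, rfl⟩, _, ⟨y₁, hy₁, y₂, hy₂, rfl⟩, rfl⟩
    ⟨x', ⟨hx', rfl⟩, _, ⟨y₃, hy₃, y₄, hy₄, rfl⟩, heq⟩
  exact hij (h x hx x' hx' y₁ hy₁ y₂ hy₂ y₃ hy₃ y₄ hy₄ heq.symm)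

end BroadNarrow

section CapPairs

variable {G : Type*} {t : G → ℝ} {A X Y Λ : Finset G} {L δ : ℝ}

/-- The number of pairs of points of `A` lying in a common unit cap. The coordinate `t` is thought
of as arc length, and the unit caps are the sets where its integer part is constant. -/
def capPairCount (t : G → ℝ) (A : Finset G) : ℝ :=
  ((A ×ˢ A).filter fun p => ⌊t p.1⌋ = ⌊t p.2⌋).card

/-- The diameter of `A`, measured in the coordinate `t`, is at most `L`. -/
def DiamLE (t : G → ℝ) (A : Finset G) (L : ℝ) : Prop :=
  ∀ x ∈ A, ∀ y ∈ A, |t x - t y| ≤ L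

/-- In the coordinate `t`, one of `X` and `Y` lies entirely to the left of the other, with a gap of
length at least `s`. -/
def Separated (t : G → ℝ) (X Y : Finset G) (s : ℝ) : Prop :=
  (∀ x ∈ X, ∀ y ∈ Y, t x + s ≤ t y) ∨ ∀ x ∈ X, ∀ y ∈ Y, t y + s ≤ t x

lemma Separated.symm {s : ℝ} (h : Separated t X Y s) : Separated t Y X s :=
  Or.imp (fun h y hy x hx => h x hx y hy) (fun h y hy x hx => h x hx y hy) (Or.symm h)

lemma Separated.mono_left {s : ℝ} {Z : Finset G} (h : Separated t X Y s) (hZ : Z ⊆ X) :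
    Separated t Z Y s :=
  h.imp (fun h z hz => h z (hZ hz)) fun h z hz => h z (hZ hz)

lemma DiamLE.subset {B : Finset G} (h : DiamLE t A L) (hB : B ⊆ A) : DiamLE t B L :=
  fun x hx y hy => h x (hB hx) y (hB hy)

lemma DiamLE.mono {L' : ℝ} (h : DiamLE t A L) (hL : L ≤ L') : DiamLE t A L' :=
  fun x hx y hy => (h x hx y hy).trans hL

lemma abs_floor_div_sub_floor_div_le {a b : ℝ} {m : ℤ} (hδ : 0 < δ) (h : |a - b| ≤ m * δ) :
    |⌊a / δ⌋ - ⌊b / δ⌋| ≤ m := by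
  have floor_le {a b : ℝ} (h : a - b ≤ m * δ) : ⌊a / δ⌋ ≤ ⌊b / δ⌋ + m := by
    rw [← Int.floor_add_intCast, div_add' _ _ _ hδ.ne']
    gcongr
    linarith
  rw [abs_le] at h ⊢
  constructor
  · linarith [floor_le (a := b) (b := a) (by linarith)]
  · linarith [floor_le h.2]

lemma abs_sub_le_of_abs_floor_div_sub_le {a b : ℝ} {m : ℤ} (hδ : 0 < δ)
    (h : |⌊a / δ⌋ - ⌊b / δ⌋| ≤ m) : |a - b| ≤ (m + 1) * δ := by
  have h' : |(⌊a / δ⌋ - ⌊b / δ⌋ : ℝ)| ≤ m := by exact_mod_cast h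
  have hdiv : |a / δ - b / δ| ≤ m + 1 := by
    rw [abs_le] at h' ⊢
    constructor <;>
      linarith [Int.floor_le (a / δ), Int.lt_floor_add_one (a / δ), Int.floor_le (b / δ),
        Int.lt_floor_add_one (b / δ)]
  rwa [← sub_div, abs_div, abs_of_pos hδ, div_le_iff₀ hδ] at hdiv

lemma add_le_of_floor_div_add_two_le {a b : ℝ} (hδ : 0 < δ) (h : ⌊a / δ⌋ + 2 ≤ ⌊b / δ⌋) :
    a + δ ≤ b := by
  have h' : (⌊a / δ⌋ + 2 : ℝ) ≤ ⌊b / δ⌋ := by exact_mod_cast h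
  rw [← div_le_div_iff_of_pos_right hδ, add_div, div_self hδ.ne']
  linarith [Int.lt_floor_add_one (a / δ), Int.floor_le (b / δ)]

lemma diamLE_filter_floor_div_eq (hδ : 0 < δ) (k : ℤ) :
    DiamLE t (A.filter fun x => ⌊t x / δ⌋ = k) δ := fun x hx y hy => by
  have hfloor := (Finset.mem_filter.1 hx).2.trans (Finset.mem_filter.1 hy).2.symm
  simpa using abs_sub_le_of_abs_floor_div_sub_le hδ (m := 0) (by simp [hfloor])

lemma diamLE_filter_abs_floor_div_sub_le_one (hδ : 0 < δ) (k : ℤ) :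
    DiamLE t (A.filter fun x => |⌊t x / δ⌋ - k| ≤ 1) (3 * δ) := fun x hx y hy => by
  have hx := (Finset.mem_filter.1 hx).2
  have hy := (Finset.mem_filter.1 hy).2
  refine (abs_sub_le_of_abs_floor_div_sub_le hδ (m := 2) ?_).trans_eq (by push_cast; ring)
  rw [abs_le] at hx hy ⊢
  omega

lemma DiamLE.card_image_floor_div_le (h : DiamLE t A L) (hL : 0 ≤ L) (hδ : 0 < δ) :
    ((A.image fun x => ⌊t x / δ⌋).card : ℝ) ≤ 2 * (L / δ) + 3 := by
  rcases A.eq_empty_or_nonempty with rfl | ⟨x₀, hx₀⟩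
  · simp only [Finset.image_empty, Finset.card_empty, Nat.cast_zero]
    positivity
  have hcard : (A.image fun x => ⌊t x / δ⌋).card ≤ 2 * ⌈L / δ⌉₊ + 1 := by
    refine card_le_of_forall_abs_sub_le (k := ⌊t x₀ / δ⌋) fun i hi => ?_
    obtain ⟨x, hx, rfl⟩ := Finset.mem_image.1 hi
    refine abs_floor_div_sub_floor_div_le hδ ((h x hx x₀ hx₀).trans ?_)
    rw [← div_le_iff₀ hδ]
    exact_mod_cast Nat.le_ceil (L / δ)
  have hcard' : ((A.image fun x => ⌊t x / δ⌋).card : ℝ) ≤ 2 * ⌈L / δ⌉₊ + 1 := by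
    exact_mod_cast hcard
  linarith [Nat.ceil_lt_add_one (div_nonneg hL hδ.le)]

lemma DiamLE.separated_of_floor_div (hY : DiamLE t Y δ) (hδ : 0 < δ) {k : ℤ}
    (hX : ∀ x ∈ X, ⌊t x / δ⌋ = k) (hfar : ∀ y ∈ Y, ¬|⌊t y / δ⌋ - k| ≤ 1) :
    Separated t X Y δ := by
  by_cases hright : ∃ y₀ ∈ Y, k + 2 ≤ ⌊t y₀ / δ⌋
  · obtain ⟨y₀, hy₀, hky₀⟩ := hright
    refine Or.inl fun x hx y hy => add_le_of_floor_div_add_two_le hδ ?_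
    have near : |⌊t y / δ⌋ - ⌊t y₀ / δ⌋| ≤ 1 :=
      abs_floor_div_sub_floor_div_le hδ (by simpa using hY y hy y₀ hy₀)
    have far := hfar y hy
    rw [abs_le] at near far
    have := hX x hx
    omega
  · push Not at hright
    refine Or.inr fun x hx y hy => add_le_of_floor_div_add_two_le hδ ?_
    have far := hfar y hy
    rw [abs_le] at far
    have := hX x hx
    have := hright y hy
    omega

lemma capPairCount_nonneg (t : G → ℝ) (A : Finset G) : 0 ≤ capPairCount t A := Nat.cast_nonneg _

lemma capPairCount_mono {B : Finset G} (h : A ⊆ B) : capPairCount t A ≤ capPairCount t B := by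
  unfold capPairCount
  gcongr

lemma one_le_capPairCount (h : A.Nonempty) : 1 ≤ capPairCount t A := by
  obtain ⟨x, hx⟩ := h
  rw [capPairCount, Nat.one_le_cast, Nat.one_le_iff_ne_zero]
  exact Finset.card_ne_zero_of_mem (a := (x, x)) (by simp [hx])

lemma sum_capPairCount_filter_le {ι : Type*} {I : Finset ι} {p : ι → G → Prop}
    [∀ i, DecidablePred (p i)] {m : ℕ} (h : ∀ x ∈ A, (I.filter fun i => p i x).card ≤ m) :
    ∑ i ∈ I, capPairCount t (A.filter (p i)) ≤ m * capPairCount t A := by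
  set P := (A ×ˢ A).filter fun q => ⌊t q.1⌋ = ⌊t q.2⌋ with hP
  have capPairCount_le (i : ι) :
      capPairCount t (A.filter (p i)) ≤ ((P.filter fun q => p i q.1).card : ℝ) := by
    rw [capPairCount, Nat.cast_le]
    refine Finset.card_le_card fun q => ?_
    simp only [hP, Finset.mem_filter, Finset.mem_product]
    tauto
  calc ∑ i ∈ I, capPairCount t (A.filter (p i))
      ≤ ∑ i ∈ I, ((P.filter fun q => p i q.1).card : ℝ) :=
        Finset.sum_le_sum fun i _ => capPairCount_le i
    _ = ∑ q ∈ P, ((I.filter fun i => p i q.1).card : ℝ) := by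
        exact_mod_cast Finset.sum_card_bipartiteAbove_eq_sum_card_bipartiteBelow
          (s := I) (t := P) fun i q => p i q.1
    _ ≤ ∑ _q ∈ P, (m : ℝ) := Finset.sum_le_sum fun q hq => by
        exact_mod_cast h q.1 (Finset.mem_product.1 (Finset.mem_filter.1 hq).1).1
    _ = m * capPairCount t A := by
        rw [Finset.sum_const, nsmul_eq_mul, mul_comm, capPairCount]

lemma sum_capPairCount_fiber_le (κ : G → ℤ) (I : Finset ℤ) :
    ∑ i ∈ I, capPairCount t (A.filter fun x => κ x = i) ≤ capPairCount t A := by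
  simpa using sum_capPairCount_filter_le (t := t) (m := 1) fun x _ =>
    Finset.card_le_one.2 fun i hi j hj =>
      (Finset.mem_filter.1 hi).2.symm.trans (Finset.mem_filter.1 hj).2

lemma sum_capPairCount_window_le (κ : G → ℤ) (I : Finset ℤ) :
    ∑ k ∈ I, capPairCount t (A.filter fun x => |κ x - k| ≤ 1) ≤ 3 * capPairCount t A :=
  sum_capPairCount_filter_le (m := 3) fun x _ =>
    card_le_of_forall_abs_sub_le (k := κ x) (m := 1) fun i hi => by
      rw [abs_sub_comm]
      exact (Finset.mem_filter.1 hi).2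

lemma capPairCount_filter_floor_eq (k : ℤ) :
    capPairCount t (A.filter fun x => ⌊t x⌋ = k) =
      ((A.filter fun x => ⌊t x⌋ = k).card : ℝ) ^ 2 := by
  rw [capPairCount, Finset.filter_true_of_mem, Finset.card_product, Nat.cast_mul, pow_two]
  intro p hp
  rw [Finset.mem_product, Finset.mem_filter, Finset.mem_filter] at hp
  rw [hp.1.2, hp.2.2]

lemma DiamLE.card_sq_le (h : DiamLE t A L) (hL : 0 ≤ L) :
    (A.card : ℝ) ^ 2 ≤ (2 * L + 3) * capPairCount t A := by
  have hcard := h.card_image_floor_div_le hL one_pos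
  have hfiber := sum_capPairCount_fiber_le (t := t) (A := A) (fun x => ⌊t x⌋)
    (A.image fun x => ⌊t x⌋)
  simp only [div_one] at hcard
  simp only [capPairCount_filter_floor_eq] at hfiber
  rw [Finset.card_eq_sum_card_image (fun x => ⌊t x⌋) A, Nat.cast_sum]
  exact sq_sum_le_card_mul_sum_sq.trans
    (mul_le_mul hcard hfiber (Finset.sum_nonneg fun _ _ => sq_nonneg _) (by positivity))

end CapPairs

section Decoupling

variable {G : Type*} [AddCommGroup G] {t : G → ℝ} {A X Y Λ : Finset G} {ε C C₀ K L : ℝ}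

/-- Quantitative transversality and curvature. If `X` is separated from the cap `Y`, a solution of
`x + (y₁ + y₂) = x' + (y₃ + y₄)` with `x, x' ∈ X` and `yᵢ ∈ Y` forces `x` and `x'` to be close: the
chord from `x` to `x'` differs from the direction of `Y` only by the sagitta of `Y`. -/
def IsTransverse (t : G → ℝ) (Λ : Finset G) (C₀ : ℝ) : Prop :=
  ∀ ⦃b s : ℝ⦄, 1 ≤ b → 0 < s → ∀ ⦃X Y : Finset G⦄, X ⊆ Λ → Y ⊆ Λ → Separated t X Y s →
    DiamLE t Y b → ∀ x ∈ X, ∀ x' ∈ X, ∀ y₁ ∈ Y, ∀ y₂ ∈ Y, ∀ y₃ ∈ Y, ∀ y₄ ∈ Y,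
    x + (y₁ + y₂) = x' + (y₃ + y₄) → |t x - t x'| ≤ C₀ * b ^ 2 / s

/-- The decoupling inequality with constant `C` and a loss of `L ^ ε` at scale `L`, for all subsets
of `Λ`. -/
def Decouples (t : G → ℝ) (Λ : Finset G) (ε C : ℝ) : Prop :=
  ∀ ⦃A : Finset G⦄, A ⊆ Λ → ∀ ⦃L : ℝ⦄, 1 ≤ L → DiamLE t A L →
    tripleEnergy A ≤ C * L ^ ε * capPairCount t A ^ 3

lemma Decouples.mixedEnergy_le (h : Decouples t Λ ε C) (hC : 0 ≤ C) (hL : 1 ≤ L) (hXΛ : X ⊆ Λ)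
    (hYΛ : Y ⊆ Λ) (hX : DiamLE t X L) (hY : DiamLE t Y L) :
    mixedEnergy X Y ≤ C * L ^ ε * (capPairCount t X * capPairCount t Y ^ 2) := by
  have := capPairCount_nonneg t X
  have := capPairCount_nonneg t Y
  have := tripleEnergy_nonneg X
  have := tripleEnergy_nonneg Y
  refine le_of_pow_le_pow_left₀ three_ne_zero (by positivity) ?_
  calc mixedEnergy X Y ^ 3 ≤ tripleEnergy X * tripleEnergy Y ^ 2 := mixedEnergy_pow_three_le X Y
    _ ≤ (C * L ^ ε * capPairCount t X ^ 3) * (C * L ^ ε * capPairCount t Y ^ 3) ^ 2 := by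
      gcongr
      exacts [h hXΛ hL hX, h hYΛ hL hY]
    _ = (C * L ^ ε * (capPairCount t X * capPairCount t Y ^ 2)) ^ 3 := by ring

lemma IsTransverse.mixedEnergy_le {b s D : ℝ} (hT : IsTransverse t Λ C₀) (hC₀ : 0 < C₀)
    (hb : 1 ≤ b) (hs : 0 < s) (hD : 0 ≤ D) (hX : X ⊆ Λ) (hY : Y ⊆ Λ) (hXY : Separated t X Y s)
    (hYb : DiamLE t Y b)
    (hcap : ∀ Z ⊆ X, DiamLE t Z (C₀ * b ^ 2 / s) → mixedEnergy Z Y ≤ D * capPairCount t Z) :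
    mixedEnergy X Y ≤ 3 * D * capPairCount t X := by
  have hδ : 0 < C₀ * b ^ 2 / s := by positivity
  set κ := fun x => ⌊t x / (C₀ * b ^ 2 / s)⌋
  have near : ∀ x ∈ X, ∀ x' ∈ X, ∀ y₁ ∈ Y, ∀ y₂ ∈ Y, ∀ y₃ ∈ Y, ∀ y₄ ∈ Y,
      x + (y₁ + y₂) = x' + (y₃ + y₄) → |κ x - κ x'| ≤ 1 :=
    fun x hx x' hx' y₁ h₁ y₂ h₂ y₃ h₃ y₄ h₄ h => abs_floor_div_sub_floor_div_le hδ <| by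
      simpa using hT hb hs hX hY hXY hYb x hx x' hx' y₁ h₁ y₂ h₂ y₃ h₃ y₄ h₄ h
  calc mixedEnergy X Y
      ≤ 3 * ∑ i ∈ X.image κ, mixedEnergy (X.filter fun x => κ x = i) Y :=
        mixedEnergy_le_three_mul_sum κ near
    _ ≤ 3 * ∑ i ∈ X.image κ, D * capPairCount t (X.filter fun x => κ x = i) := by
        gcongr with i
        exact hcap _ (Finset.filter_subset _ _) (diamLE_filter_floor_div_eq hδ i)
    _ = 3 * D * ∑ i ∈ X.image κ, capPairCount t (X.filter fun x => κ x = i) := by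
        rw [← Finset.mul_sum, mul_assoc]
    _ ≤ 3 * D * capPairCount t X := by
        gcongr
        exact sum_capPairCount_fiber_le κ _

lemma mixedEnergy_le_of_mixedEnergy_swap_le {Z : Finset G} {D g g₁ g₂ : ℝ} (hD : 0 ≤ D)
    (hg : 0 ≤ g) (hg_sq : g ^ 2 = g₁ * g₂)
    (hYZ : mixedEnergy Y Z ≤ 9 * g₁ * D * (capPairCount t Y * capPairCount t Z ^ 2))
    (hY : tripleEnergy Y ≤ g₂ * D * capPairCount t Y ^ 3) :
    mixedEnergy Z Y ≤ 3 * g * D * capPairCount t Y ^ 2 * capPairCount t Z := by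
  have := capPairCount_nonneg t Y
  have := capPairCount_nonneg t Z
  refine le_of_pow_le_pow_left₀ two_ne_zero (by positivity) ?_
  calc mixedEnergy Z Y ^ 2 ≤ mixedEnergy Y Z * tripleEnergy Y := mixedEnergy_sq_le Z Y
    _ ≤ 9 * g₁ * D * (capPairCount t Y * capPairCount t Z ^ 2) *
        (g₂ * D * capPairCount t Y ^ 3) :=
      mul_le_mul hYZ hY (tripleEnergy_nonneg Y) ((mixedEnergy_nonneg Y Z).trans hYZ)
    _ = 9 * (g₁ * g₂) * D ^ 2 * (capPairCount t Y ^ 2) ^ 2 * capPairCount t Z ^ 2 := by ring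
    _ = (3 * g * D * capPairCount t Y ^ 2 * capPairCount t Z) ^ 2 := by
      rw [← hg_sq]
      ring

/-- Each use of transversality cuts `X` into caps of length `γ ^ 2 * L / (C₀ * K)`, and the argument
is then repeated with the roles of `X` and `Y` exchanged and `γ ^ 2` in place of `γ`. The gain in
the mixed energy, `γ ^ (n * ε / 2)`, comes from applying the decoupling inequality to the short cap
`Y` in each of the `n` rounds. -/
lemma Decouples.mixedEnergy_le_of_separated (h : Decouples t Λ ε C) (hT : IsTransverse t Λ C₀)
    (hε : 0 ≤ ε) (hC : 0 ≤ C) (hC₀ : 1 ≤ C₀) (hK : 1 ≤ K) (hL : 1 ≤ L) (n : ℕ) {γ : ℝ}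
    (hγ : 0 < γ) (hγ1 : γ ≤ 1) (hscale : 1 ≤ γ ^ 2 ^ n * L / (C₀ * K)) (hXΛ : X ⊆ Λ) (hYΛ : Y ⊆ Λ)
    (hXY : Separated t X Y (L / K)) (hX : DiamLE t X L) (hY : DiamLE t Y (γ * L / (C₀ * K))) :
    mixedEnergy X Y ≤
      9 * γ ^ (n * ε / 2) * (C * L ^ ε) * (capPairCount t X * capPairCount t Y ^ 2) := by
  have hCK : 1 ≤ C₀ * K := one_le_mul_of_one_le_of_one_le hC₀ hK
  have hbγ : γ * L / (C₀ * K) ≤ γ * L := div_le_self (by positivity) hCK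
  have hbL : γ * L / (C₀ * K) ≤ L := hbγ.trans (mul_le_of_le_one_left (by positivity) hγ1)
  have := capPairCount_nonneg t X
  have := capPairCount_nonneg t Y
  induction n generalizing γ X Y with
  | zero =>
    refine (h.mixedEnergy_le hC hL hXΛ hYΛ hX (hY.mono hbL)).trans ?_
    have : 0 ≤ C * L ^ ε * (capPairCount t X * capPairCount t Y ^ 2) := by positivity
    simp only [Nat.cast_zero, zero_mul, zero_div, rpow_zero]
    linarith
  | succ n ih =>
    have hb : 1 ≤ γ * L / (C₀ * K) := hscale.trans (by
      gcongr
      exact pow_le_of_le_one hγ.le hγ1 (by positivity))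
    have cap_length : C₀ * (γ * L / (C₀ * K)) ^ 2 / (L / K) = γ ^ 2 * L / (C₀ * K) := by
      field_simp
    have hEY : tripleEnergy Y ≤ γ ^ ε * (C * L ^ ε) * capPairCount t Y ^ 3 := by
      refine (h hYΛ hb hY).trans ?_
      rw [mul_left_comm, ← mul_rpow hγ.le (by positivity)]
      gcongr
    have cap_le (Z : Finset G) (hZ : Z ⊆ X) (hZd : DiamLE t Z (γ ^ 2 * L / (C₀ * K))) :
        mixedEnergy Z Y ≤ 3 * γ ^ ((n + 1 : ℕ) * ε / 2) * (C * L ^ ε) * capPairCount t Y ^ 2 *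
          capPairCount t Z := by
      have hγ2 : γ ^ 2 ≤ 1 := pow_le_one₀ hγ.le hγ1
      have hYZ := ih (by positivity) hγ2 (by rwa [← pow_mul, ← pow_succ']) hYΛ (hZ.trans hXΛ)
        (hXY.mono_left hZ).symm (hY.mono hbL) hZd (div_le_self (by positivity) hCK)
        ((div_le_self (by positivity) hCK).trans (mul_le_of_le_one_left (by positivity) hγ2))
        (capPairCount_nonneg t Y) (capPairCount_nonneg t Z)
      refine mixedEnergy_le_of_mixedEnergy_swap_le (by positivity) (by positivity) ?_ hYZ hEY
      rw [← rpow_natCast, ← rpow_natCast, ← rpow_mul hγ.le, ← rpow_mul hγ.le, ← rpow_add hγ]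
      push_cast
      ring_nf
    calc mixedEnergy X Y ≤ 3 * (3 * γ ^ ((n + 1 : ℕ) * ε / 2) * (C * L ^ ε) *
          capPairCount t Y ^ 2) * capPairCount t X :=
        hT.mixedEnergy_le (by positivity) hb (by positivity) (by positivity) hXΛ hYΛ hXY hY
          (by rwa [cap_length])
      _ = _ := by ring

lemma Decouples.sum_tripleEnergy_window_le {ℓ : ℝ} (h : Decouples t Λ ε C) (hC : 0 ≤ C)
    (hℓ : 1 ≤ ℓ) (hA : A ⊆ Λ) (I : Finset ℤ) :
    ∑ k ∈ I, tripleEnergy (A.filter fun x => |⌊t x / ℓ⌋ - k| ≤ 1) ≤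
      3 * (C * (3 * ℓ) ^ ε) * capPairCount t A ^ 3 := by
  have := capPairCount_nonneg t A
  have window_le (k : ℤ) : tripleEnergy (A.filter fun x => |⌊t x / ℓ⌋ - k| ≤ 1) ≤
      C * (3 * ℓ) ^ ε * capPairCount t A ^ 2 *
        capPairCount t (A.filter fun x => |⌊t x / ℓ⌋ - k| ≤ 1) := by
    have hW := Finset.filter_subset (fun x => |⌊t x / ℓ⌋ - k| ≤ 1) A
    have := capPairCount_nonneg t (A.filter fun x => |⌊t x / ℓ⌋ - k| ≤ 1)
    refine (h (hW.trans hA) (by linarith)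
      (diamLE_filter_abs_floor_div_sub_le_one (by positivity) k)).trans ?_
    rw [pow_succ, ← mul_assoc]
    gcongr
    exact capPairCount_mono hW
  calc ∑ k ∈ I, tripleEnergy (A.filter fun x => |⌊t x / ℓ⌋ - k| ≤ 1)
      ≤ C * (3 * ℓ) ^ ε * capPairCount t A ^ 2 *
          ∑ k ∈ I, capPairCount t (A.filter fun x => |⌊t x / ℓ⌋ - k| ≤ 1) := by
        rw [Finset.mul_sum]
        exact Finset.sum_le_sum fun k _ => window_le k
    _ ≤ C * (3 * ℓ) ^ ε * capPairCount t A ^ 2 * (3 * capPairCount t A) := by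
        gcongr
        exact sum_capPairCount_window_le _ I
    _ = 3 * (C * (3 * ℓ) ^ ε) * capPairCount t A ^ 3 := by ring

lemma Decouples.sum_tripleEnergy_window_le_div_four (h : Decouples t Λ ε C) (hC : 0 ≤ C)
    (hK : 0 < K) (hnarrow : 3 * (3 / K) ^ ε ≤ 1 / 4) (hKL : K ≤ L) (hA : A ⊆ Λ) (I : Finset ℤ) :
    ∑ k ∈ I, tripleEnergy (A.filter fun x => |⌊t x / (L / K)⌋ - k| ≤ 1) ≤
      C * L ^ ε * capPairCount t A ^ 3 / 4 := by
  have := capPairCount_nonneg t A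
  have hL : 0 ≤ L := hK.le.trans hKL
  calc ∑ k ∈ I, tripleEnergy (A.filter fun x => |⌊t x / (L / K)⌋ - k| ≤ 1)
      ≤ 3 * (C * (3 * (L / K)) ^ ε) * capPairCount t A ^ 3 :=
        h.sum_tripleEnergy_window_le hC ((one_le_div₀ hK).2 hKL) hA I
    _ = 3 * (3 / K) ^ ε * (C * L ^ ε * capPairCount t A ^ 3) := by
        rw [← mul_comm_div, mul_rpow (by positivity) hL]
        ring
    _ ≤ 1 / 4 * (C * L ^ ε * capPairCount t A ^ 3) := by gcongr
    _ = C * L ^ ε * capPairCount t A ^ 3 / 4 := by ring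

lemma Decouples.mixedEnergy_cell_le (h : Decouples t Λ ε C) (hT : IsTransverse t Λ C₀)
    (hε : 0 ≤ ε) (hC : 0 ≤ C) (hC₀ : 1 ≤ C₀) (hK : 1 ≤ K) {n : ℕ} (hL : C₀ * K * K ^ 2 ^ n ≤ L)
    (hAΛ : A ⊆ Λ) (hA : DiamLE t A L) (k j : ℤ) :
    mixedEnergy (A.filter fun x => ⌊t x / (L / K)⌋ = k)
      ((A.filter fun x => ¬|⌊t x / (L / K)⌋ - k| ≤ 1).filter
        fun x => ⌊t x / (L / (C₀ * K ^ 2))⌋ = j) ≤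
      9 * (1 / K) ^ (n * ε / 2) * (C * L ^ ε * capPairCount t A ^ 3) := by
  have hCK : 1 ≤ C₀ * K := one_le_mul_of_one_le_of_one_le hC₀ hK
  have hL1 : 1 ≤ L := (one_le_mul_of_one_le_of_one_le hCK (one_le_pow₀ hK)).trans hL
  set X := A.filter fun x => ⌊t x / (L / K)⌋ = k
  set V := A.filter fun x => ¬|⌊t x / (L / K)⌋ - k| ≤ 1
  set Y := V.filter fun x => ⌊t x / (L / (C₀ * K ^ 2))⌋ = j
  have hX : X ⊆ A := Finset.filter_subset _ _
  have hY : Y ⊆ A := (Finset.filter_subset _ _).trans (Finset.filter_subset _ _)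
  have hYd : DiamLE t Y (L / (C₀ * K ^ 2)) := diamLE_filter_floor_div_eq (by positivity) j
  have hXY : Separated t X Y (L / K) := by
    refine (hYd.mono ?_).separated_of_floor_div (by positivity)
      (fun x hx => (Finset.mem_filter.1 hx).2)
      fun y hy => (Finset.mem_filter.1 (Finset.mem_filter.1 hy).1).2
    gcongr
    nlinarith
  have hscale : 1 ≤ (1 / K) ^ 2 ^ n * L / (C₀ * K) := by
    rw [one_div_pow, one_div_mul_eq_div, div_div, one_le_div₀ (by positivity), mul_comm]
    exact hL
  have := capPairCount_nonneg t A
  have := capPairCount_nonneg t X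
  have := capPairCount_nonneg t Y
  calc mixedEnergy X Y
      ≤ 9 * (1 / K) ^ (n * ε / 2) * (C * L ^ ε) * (capPairCount t X * capPairCount t Y ^ 2) :=
        h.mixedEnergy_le_of_separated hT hε hC hC₀ hK hL1 n (by positivity)
          ((div_le_one₀ (by positivity)).2 hK) hscale (hX.trans hAΛ) (hY.trans hAΛ) hXY
          (hA.subset hX) (hYd.mono (le_of_eq (by field_simp)))
    _ ≤ 9 * (1 / K) ^ (n * ε / 2) * (C * L ^ ε) * (capPairCount t A * capPairCount t A ^ 2) := by
        gcongr <;> exact capPairCount_mono ‹_›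
    _ = 9 * (1 / K) ^ (n * ε / 2) * (C * L ^ ε * capPairCount t A ^ 3) := by ring

lemma le_max_of_le_add_of_pow_four_eq {e a c B N : ℝ} (he : 0 ≤ e) (h : e ≤ a + c * B)
    (hB : B ^ 4 = N * e ^ 3) : e ≤ max (2 * a) ((2 * c) ^ 4 * N) := by
  rcases he.eq_or_lt with rfl | he
  · have hB0 : B = 0 := by simpa using hB
    rw [hB0, mul_zero, add_zero] at h
    exact le_max_of_le_left (by linarith)
  rcases le_total e (2 * a) with ha | ha
  · exact ha.trans (le_max_left _ _)
  refine le_trans (le_of_mul_le_mul_right ?_ (pow_pos he 3)) (le_max_right _ _)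
  calc e * e ^ 3 = e ^ 4 := by ring
    _ ≤ (2 * c * B) ^ 4 := by
      gcongr
      linarith
    _ = (2 * c) ^ 4 * N * e ^ 3 := by rw [mul_pow, hB, mul_assoc]

/-- The numerical condition `hnarrow` takes care of the caps of length `L / K`, and `hbroad` of the
interaction of separated caps. -/
lemma Decouples.tripleEnergy_le_half (h : Decouples t Λ ε C) (hT : IsTransverse t Λ C₀)
    (hε : 0 ≤ ε) (hC : 0 ≤ C) (hC₀ : 1 ≤ C₀) (hK : 1 ≤ K) {n : ℕ}
    (hnarrow : 3 * (3 / K) ^ ε ≤ 1 / 4)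
    (hbroad : (10 * (2 * (C₀ * K ^ 2) + 3) ^ 2) ^ 4 * (9 * (1 / K) ^ (n * ε / 2)) ≤ 1 / 2)
    (hL : C₀ * K * K ^ 2 ^ n ≤ L) (hAΛ : A ⊆ Λ) (hA : DiamLE t A L) :
    tripleEnergy A ≤ C / 2 * L ^ ε * capPairCount t A ^ 3 := by
  have hKL : K ≤ L := calc
    K ≤ C₀ * K := le_mul_of_one_le_left (by positivity) hC₀
    _ ≤ C₀ * K * K ^ 2 ^ n := le_mul_of_one_le_right (by positivity) (one_le_pow₀ hK)
    _ ≤ L := hL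
  have hL0 : 0 < L := by linarith
  have hcard (δ : ℝ) (hδ : 1 ≤ δ) (hδ' : δ ≤ C₀ * K ^ 2) :
      ((A.image fun x => ⌊t x / (L / δ)⌋).card : ℝ) ≤ 2 * (C₀ * K ^ 2) + 3 := by
    refine (hA.card_image_floor_div_le hL0.le (by positivity)).trans ?_
    rw [div_div_cancel₀ hL0.ne']
    gcongr
  have := capPairCount_nonneg t A
  set S := C * L ^ ε * capPairCount t A ^ 3 with hS
  set N := 9 * (1 / K) ^ (n * ε / 2) * S with hN
  have hE := tripleEnergy_nonneg A
  obtain ⟨B, hB, hB4⟩ : ∃ B, 0 ≤ B ∧ B ^ 4 = N * tripleEnergy A ^ 3 :=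
    ⟨(N * tripleEnergy A ^ 3) ^ (1 / 4 : ℝ), by positivity, by
      rw [← rpow_natCast, ← rpow_mul (by positivity)]
      norm_num⟩
  have broad_narrow := tripleEnergy_le_sum_window_add (c := fun x => ⌊t x / (L / K)⌋)
    (κ := fun x => ⌊t x / (L / (C₀ * K ^ 2))⌋) hB (hcard K hK (by nlinarith))
    (hcard _ (by nlinarith) le_rfl) fun k j => by
      rw [hB4]
      gcongr
      exact h.mixedEnergy_cell_le hT hε hC hC₀ hK hL hAΛ hA k j
  have narrow := h.sum_tripleEnergy_window_le_div_four hC (by positivity) hnarrow hKL hAΛ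
    (A.image fun x => ⌊t x / (L / K)⌋)
  calc tripleEnergy A ≤ max (2 * (S / 4)) ((2 * (5 * (2 * (C₀ * K ^ 2) + 3) ^ 2)) ^ 4 * N) :=
        le_max_of_le_add_of_pow_four_eq hE (broad_narrow.trans (by gcongr)) hB4
    _ ≤ S / 2 := max_le (by linarith) <| calc
        _ = (10 * (2 * (C₀ * K ^ 2) + 3) ^ 2) ^ 4 * (9 * (1 / K) ^ (n * ε / 2)) * S := by
          rw [hN]
          ring
        _ ≤ 1 / 2 * S := by gcongr
        _ = S / 2 := by ring
    _ = C / 2 * L ^ ε * capPairCount t A ^ 3 := by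
        rw [hS]
        ring

lemma DiamLE.tripleEnergy_le (h : DiamLE t A L) (hL : 0 ≤ L) :
    tripleEnergy A ≤ (2 * L + 3) ^ 3 * capPairCount t A ^ 3 :=
  calc tripleEnergy A ≤ (A.card : ℝ) ^ 6 := tripleEnergy_le_card_pow A
    _ = ((A.card : ℝ) ^ 2) ^ 3 := by ring
    _ ≤ ((2 * L + 3) * capPairCount t A) ^ 3 := by
      gcongr
      exact h.card_sq_le hL
    _ = (2 * L + 3) ^ 3 * capPairCount t A ^ 3 := mul_pow _ _ _

lemma exists_broad_narrow_parameters (hε : 0 < ε) (C₀ : ℝ) : ∃ K : ℝ, ∃ n : ℕ, 1 ≤ K ∧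
    3 * (3 / K) ^ ε ≤ 1 / 4 ∧
    (10 * (2 * (C₀ * K ^ 2) + 3) ^ 2) ^ 4 * (9 * (1 / K) ^ (n * ε / 2)) ≤ 1 / 2 := by
  set K : ℝ := 3 * 12 ^ (1 / ε) with hK
  have hK1 : 1 < K := by
    have : (1 : ℝ) ≤ 12 ^ (1 / ε) := one_le_rpow (by norm_num) (by positivity)
    linarith
  have hnarrow : (3 / K) ^ ε = 1 / 12 := by
    rw [hK, div_mul_cancel_left₀ three_ne_zero, inv_rpow (by positivity),
      ← rpow_mul (by norm_num), one_div_mul_cancel hε.ne', rpow_one, one_div]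
  have hγ : (1 / K) ^ (ε / 2) < 1 :=
    rpow_lt_one (by positivity) ((div_lt_one (by positivity)).2 hK1) (by positivity)
  have htendsto := ((tendsto_pow_atTop_nhds_zero_of_lt_one (by positivity) hγ).const_mul
    9).const_mul ((10 * (2 * (C₀ * K ^ 2) + 3) ^ 2) ^ 4)
  rw [mul_zero, mul_zero] at htendsto
  obtain ⟨n, hn⟩ := (htendsto.eventually_le_const one_half_pos).exists
  refine ⟨K, n, hK1.le, by rw [hnarrow]; norm_num, ?_⟩
  rwa [mul_div_assoc, mul_comm (n : ℝ), rpow_mul (by positivity), rpow_natCast]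

variable (G) in
lemma exists_decouples_max_half (hε : 0 < ε) (hC₀ : 1 ≤ C₀) :
    ∃ C₁ : ℝ, 0 < C₁ ∧ ∀ (t : G → ℝ) (Λ : Finset G), IsTransverse t Λ C₀ →
      ∀ C, 0 ≤ C → Decouples t Λ ε C → Decouples t Λ ε (max (C / 2) C₁) := by
  obtain ⟨K, n, hK, hnarrow, hbroad⟩ := exists_broad_narrow_parameters hε C₀
  set L₀ := C₀ * K * K ^ 2 ^ n
  refine ⟨(2 * L₀ + 3) ^ 3, by positivity, fun t Λ hT C hC h A hAΛ L hL hA => ?_⟩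
  have hS := capPairCount_nonneg t A
  rcases le_total L₀ L with hlarge | hsmall
  · refine (h.tripleEnergy_le_half hT hε.le hC hC₀ hK hnarrow hbroad hlarge hAΛ hA).trans ?_
    gcongr
    exact le_max_left _ _
  · calc tripleEnergy A ≤ (2 * L + 3) ^ 3 * capPairCount t A ^ 3 := hA.tripleEnergy_le (by linarith)
      _ ≤ (2 * L₀ + 3) ^ 3 * capPairCount t A ^ 3 := by gcongr
      _ ≤ max (C / 2) ((2 * L₀ + 3) ^ 3) * L ^ ε * capPairCount t A ^ 3 := by
        gcongr
        exact (le_max_right _ _).trans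
          (le_mul_of_one_le_right (by positivity) (one_le_rpow hL hε.le))

lemma decouples_card_pow (t : G → ℝ) (Λ : Finset G) (hε : 0 ≤ ε) :
    Decouples t Λ ε ((Λ.card : ℝ) ^ 6) := by
  intro A hAΛ L hL _
  have hEA := tripleEnergy_le_card_pow A
  rcases A.eq_empty_or_nonempty with rfl | hA
  · have := capPairCount_nonneg t (∅ : Finset G)
    rw [Finset.card_empty, Nat.cast_zero, zero_pow (by norm_num)] at hEA
    exact hEA.trans (by positivity)
  · calc tripleEnergy A ≤ (A.card : ℝ) ^ 6 := hEA
      _ ≤ (Λ.card : ℝ) ^ 6 * 1 * 1 ^ 3 := by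
        rw [one_pow, mul_one, mul_one]
        gcongr
      _ ≤ (Λ.card : ℝ) ^ 6 * L ^ ε * capPairCount t A ^ 3 := by
        gcongr
        exacts [one_le_rpow hL hε, one_le_capPairCount hA]

lemma of_max_half_step {P : ℝ → Prop} {a c : ℝ} (hc : 0 < c) (ha : 0 ≤ a) (hPa : P a)
    (hstep : ∀ x, 0 ≤ x → P x → P (max (x / 2) c)) : P c := by
  have iterate (k : ℕ) : P (max (a / 2 ^ (k + 1)) c) := by
    induction k with
    | zero => simpa using hstep a ha hPa
    | succ k ih =>
      have := hstep _ (by positivity) ih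
      rwa [← max_div_div_right zero_le_two, max_assoc, max_eq_right (half_le_self hc.le), div_div,
        ← pow_succ] at this
  obtain ⟨k, hk⟩ := pow_unbounded_of_one_lt (a / c) one_lt_two
  have hmax : a / 2 ^ (k + 1) ≤ c := by
    rw [div_le_comm₀ (by positivity) hc]
    exact hk.le.trans (pow_le_pow_right₀ one_le_two k.le_succ)
  simpa only [max_eq_right hmax] using iterate k

variable (G) in
theorem exists_decouples (hε : 0 < ε) (hC₀ : 1 ≤ C₀) :
    ∃ C₁ : ℝ, 0 < C₁ ∧
      ∀ (t : G → ℝ) (Λ : Finset G), IsTransverse t Λ C₀ → Decouples t Λ ε C₁ := by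
  obtain ⟨C₁, hC₁, hstep⟩ := exists_decouples_max_half G hε hC₀
  exact ⟨C₁, hC₁, fun t Λ hT => of_max_half_step hC₁ (by positivity)
    (decouples_card_pow t Λ hε.le) (hstep t Λ hT)⟩

end Decoupling

section Arc

lemma pow_mul_pow_le_pow {a b : ℝ} {k m n : ℕ} (ha : 0 ≤ a) (hab : a ≤ b) (h : k + m = n) :
    a ^ k * b ^ m ≤ b ^ n := by
  have hb : 0 ≤ b := ha.trans hab
  rw [← h, pow_add]
  gcongr

lemma abs_snd_mul_abs_cross_le (u₁ u₂ v₁ v₂ w₁ w₂ : ℝ) :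
    |u₂| * |v₁ * w₂ - v₂ * w₁| ≤
      |v₁| * |u₁ * w₁ + u₂ * w₂| + |w₁| * |u₁ * v₁ + u₂ * v₂| := by
  simp only [← abs_mul]
  refine le_trans (le_of_eq (congrArg _ ?_)) (abs_sub _ _)
  ring

/-- The lattice points with squared length in `[ρ⁶, ρ⁶ + 3ρ²]`. They contain the annulus of the
theorem with `R = ρ³`, whose squared outer radius is `ρ⁶ + 2ρ² + ρ⁻²`. -/
structure InAnnulus (ρ : ℝ) (p : ℤ × ℤ) : Prop where
  le_sq : ρ ^ 6 ≤ (p.1 : ℝ) ^ 2 + (p.2 : ℝ) ^ 2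
  sq_le : (p.1 : ℝ) ^ 2 + (p.2 : ℝ) ^ 2 ≤ ρ ^ 6 + 3 * ρ ^ 2

/-- The part of the annulus in the quadrant around the positive first axis, where the second
coordinate parametrizes the circle. -/
structure InArc (ρ : ℝ) (p : ℤ × ℤ) : Prop extends InAnnulus ρ p where
  abs_snd_le : |(p.2 : ℝ)| ≤ p.1

/-- The coordinate of an arc point in which caps of length `ρ / 10` become unit caps. -/
def arcCoord (ρ : ℝ) (p : ℤ × ℤ) : ℝ := p.2 / (ρ / 10)

variable {ρ β σ : ℝ} {p q r x x' c y₂ y₃ y₄ : ℤ × ℤ} {Λ : Finset (ℤ × ℤ)}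

lemma InAnnulus.abs_sq_sub_sq_le (hp : InAnnulus ρ p) (hq : InAnnulus ρ q) :
    |((p.1 : ℝ) ^ 2 + (p.2 : ℝ) ^ 2) - ((q.1 : ℝ) ^ 2 + (q.2 : ℝ) ^ 2)| ≤ 3 * ρ ^ 2 := by
  rw [abs_le]
  constructor <;> linarith [hp.le_sq, hp.sq_le, hq.le_sq, hq.sq_le]

lemma abs_snd_sub_eq (hρ : 0 < ρ) (p q : ℤ × ℤ) :
    |(p.2 : ℝ) - q.2| = |arcCoord ρ p - arcCoord ρ q| * (ρ / 10) := by
  rw [arcCoord, arcCoord, ← sub_div, abs_div, abs_of_pos (by positivity : 0 < ρ / 10),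
    div_mul_cancel₀ _ (by positivity)]

lemma abs_snd_sub_le_of_floor_eq (hρ : 0 < ρ) (h : ⌊arcCoord ρ p⌋ = ⌊arcCoord ρ q⌋) :
    |(p.2 : ℝ) - q.2| ≤ ρ / 10 := by
  rw [abs_snd_sub_eq hρ]
  exact mul_le_of_le_one_left (by positivity) (Int.abs_sub_lt_one_of_floor_eq_floor h).le

namespace InArc

lemma fst_nonneg (hp : InArc ρ p) : (0 : ℝ) ≤ p.1 :=
  (abs_nonneg _).trans hp.abs_snd_le

lemma sq_snd_le_sq_fst (hp : InArc ρ p) : (p.2 : ℝ) ^ 2 ≤ (p.1 : ℝ) ^ 2 :=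
  sq_le_sq.2 (hp.abs_snd_le.trans (le_abs_self _))

lemma le_fst (hp : InArc ρ p) : 0.7 * ρ ^ 3 ≤ p.1 := by
  refine le_of_sq_le_sq ?_ hp.fst_nonneg
  nlinarith [hp.le_sq, hp.sq_snd_le_sq_fst, (by positivity : 0 ≤ ρ ^ 6)]

lemma fst_le (hρ : 10 ≤ ρ) (hp : InArc ρ p) : (p.1 : ℝ) ≤ 1.01 * ρ ^ 3 := by
  have hpow : 10 ^ 4 * ρ ^ 2 ≤ ρ ^ 6 := pow_mul_pow_le_pow (by norm_num) hρ rfl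
  refine le_of_sq_le_sq ?_ (by positivity)
  nlinarith [hp.sq_le, sq_nonneg (p.2 : ℝ)]

lemma abs_snd_le_pow (hρ : 10 ≤ ρ) (hp : InArc ρ p) : |(p.2 : ℝ)| ≤ ρ ^ 3 := by
  have hpow : 10 ^ 4 * ρ ^ 2 ≤ ρ ^ 6 := pow_mul_pow_le_pow (by norm_num) hρ rfl
  refine abs_le_of_sq_le_sq ?_ (by positivity)
  nlinarith [hp.sq_le, hp.sq_snd_le_sq_fst]

/-- Integrality removes the error term coming from the thickness of the annulus. -/
lemma abs_fst_sub_le (hρ : 10 ≤ ρ) (hp : InArc ρ p) (hq : InArc ρ q) :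
    |p.1 - q.1| ≤ |p.2 - q.2| := by
  have hsum : 3 * ρ ^ 2 < (p.1 : ℝ) + q.1 := by
    have hpow : 10 ^ 1 * ρ ^ 2 ≤ ρ ^ 3 := pow_mul_pow_le_pow (by norm_num) hρ rfl
    linarith [hp.le_fst, hq.le_fst, pow_pos (by linarith : 0 < ρ) 2]
  have hsum_pos : 0 < (p.1 : ℝ) + q.1 := lt_of_le_of_lt (by positivity) hsum
  have hsum_snd : |(p.2 : ℝ) + q.2| ≤ p.1 + q.1 :=
    (abs_add_le _ _).trans (add_le_add hp.abs_snd_le hq.abs_snd_le)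
  have hmul : |(p.1 : ℝ) - q.1| * (p.1 + q.1) < (|(p.2 : ℝ) - q.2| + 1) * (p.1 + q.1) :=
    calc |(p.1 : ℝ) - q.1| * (p.1 + q.1)
        = |(((p.1 : ℝ) ^ 2 + (p.2 : ℝ) ^ 2) - ((q.1 : ℝ) ^ 2 + (q.2 : ℝ) ^ 2)) -
            ((p.2 : ℝ) - q.2) * (p.2 + q.2)| := by
          rw [← abs_of_pos hsum_pos, ← abs_mul]
          ring_nf
      _ ≤ 3 * ρ ^ 2 + |(p.2 : ℝ) - q.2| * |(p.2 : ℝ) + q.2| := by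
          rw [← abs_mul]
          exact (abs_sub _ _).trans
            (add_le_add_left (hp.abs_sq_sub_sq_le hq.toInAnnulus) _)
      _ ≤ 3 * ρ ^ 2 + |(p.2 : ℝ) - q.2| * (p.1 + q.1) := by gcongr
      _ < (|(p.2 : ℝ) - q.2| + 1) * (p.1 + q.1) := by linarith
  have hlt := lt_of_mul_lt_mul_right hmul hsum_pos.le
  exact Int.lt_add_one_iff.1 (by exact_mod_cast hlt)

lemma eq_of_snd_eq (hρ : 10 ≤ ρ) (hp : InArc ρ p) (hq : InArc ρ q) (h : p.2 = q.2) : p = q := by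
  have := hp.abs_fst_sub_le hρ hq
  rw [h, sub_self, abs_zero, abs_nonpos_iff] at this
  exact Prod.ext (sub_eq_zero.1 this) h

lemma abs_dot_sub_le (hρ : 10 ≤ ρ) (hp : InArc ρ p) (hq : InArc ρ q)
    (hβ : |(q.2 : ℝ) - p.2| ≤ β) :
    |(p.1 : ℝ) * (q.1 - p.1) + p.2 * (q.2 - p.2)| ≤ 3 / 2 * ρ ^ 2 + β ^ 2 := by
  have hfst : |(q.1 : ℝ) - p.1| ≤ |(q.2 : ℝ) - p.2| := by
    exact_mod_cast hq.abs_fst_sub_le hρ hp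
  have hfst_sq : ((q.1 : ℝ) - p.1) ^ 2 ≤ β ^ 2 :=
    sq_le_sq.2 ((hfst.trans hβ).trans (le_abs_self β))
  have hsnd_sq : ((q.2 : ℝ) - p.2) ^ 2 ≤ β ^ 2 := sq_le_sq.2 (hβ.trans (le_abs_self β))
  rw [abs_le]
  constructor <;>
    linarith [hp.le_sq, hp.sq_le, hq.le_sq, hq.sq_le, sq_nonneg ((q.1 : ℝ) - p.1),
      sq_nonneg ((q.2 : ℝ) - p.2)]

lemma dot_nonneg (hp : InArc ρ p) (hq : InArc ρ q) : 0 ≤ (p.1 : ℝ) * q.1 + p.2 * q.2 := by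
  have : |(p.2 : ℝ) * q.2| ≤ p.1 * q.1 := by
    rw [abs_mul]
    exact mul_le_mul hp.abs_snd_le hq.abs_snd_le (abs_nonneg _) hp.fst_nonneg
  linarith [(abs_le.1 this).1]

lemma mul_pow_six_le_fst_add_mul_cross (hρ : 10 ≤ ρ) (hp : InArc ρ p) (hq : InArc ρ q)
    (h : q.2 < p.2) :
    0.7 * (((p.2 : ℝ) - q.2) * ρ ^ 6) ≤ (p.1 + q.1) * ((q.1 : ℝ) * p.2 - q.2 * p.1) := by
  have hgap : (1 : ℝ) ≤ p.2 - q.2 := by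
    rw [le_sub_iff_add_le']
    exact_mod_cast h
  have herror : -(3 * ρ ^ 5) ≤
      (q.2 : ℝ) * (((q.1 : ℝ) ^ 2 + (q.2 : ℝ) ^ 2) - ((p.1 : ℝ) ^ 2 + (p.2 : ℝ) ^ 2)) := by
    refine le_trans (le_of_eq ?_) (neg_le_of_abs_le (a := _) (b := ρ ^ 3 * (3 * ρ ^ 2)) ?_)
    · ring
    · rw [abs_mul]
      gcongr
      exacts [hq.abs_snd_le_pow hρ, hq.abs_sq_sub_sq_le hp.toInAnnulus]
  have hmain : ((p.2 : ℝ) - q.2) * ρ ^ 6 ≤ (p.2 - q.2) *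
      ((p.1 : ℝ) * q.1 + p.2 * q.2 + ((q.1 : ℝ) ^ 2 + (q.2 : ℝ) ^ 2)) :=
    mul_le_mul_of_nonneg_left (by linarith [hp.dot_nonneg hq, hq.le_sq]) (by linarith)
  have hsmall : 10 * ρ ^ 5 ≤ ((p.2 : ℝ) - q.2) * ρ ^ 6 := by
    have hpow : 10 ^ 1 * ρ ^ 5 ≤ ρ ^ 6 := pow_mul_pow_le_pow (by norm_num) hρ rfl
    nlinarith [(by positivity : 0 ≤ ρ ^ 6)]
  linarith

lemma mul_pow_le_cross (hρ : 10 ≤ ρ) (hp : InArc ρ p) (hq : InArc ρ q) (h : q.2 < p.2) :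
    ((p.2 : ℝ) - q.2) * ρ ^ 3 / 5 ≤ (q.1 : ℝ) * p.2 - q.2 * p.1 := by
  have hgap : (0 : ℝ) < p.2 - q.2 := sub_pos.2 (by exact_mod_cast h)
  have hgap6 : 0 ≤ ((p.2 : ℝ) - q.2) * ρ ^ 6 := by positivity
  have hsum_pos : 0 < (p.1 : ℝ) + q.1 := by
    linarith [hp.le_fst, hq.fst_nonneg, pow_pos (by linarith : 0 < ρ) 3]
  refine le_of_mul_le_mul_left ?_ hsum_pos
  calc ((p.1 : ℝ) + q.1) * (((p.2 : ℝ) - q.2) * ρ ^ 3 / 5)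
      ≤ (1.01 * ρ ^ 3 + 1.01 * ρ ^ 3) * (((p.2 : ℝ) - q.2) * ρ ^ 3 / 5) := by
        gcongr
        exacts [hp.fst_le hρ, hq.fst_le hρ]
    _ ≤ 0.7 * (((p.2 : ℝ) - q.2) * ρ ^ 6) := by linarith
    _ ≤ (p.1 + q.1) * ((q.1 : ℝ) * p.2 - q.2 * p.1) :=
        hp.mul_pow_six_le_fst_add_mul_cross hρ hq h

lemma abs_snd_sub_mul_pow_le_abs_cross (hρ : 10 ≤ ρ) (hp : InArc ρ p) (hq : InArc ρ q) :
    |(p.2 : ℝ) - q.2| * ρ ^ 3 / 5 ≤ |(q.1 : ℝ) * p.2 - q.2 * p.1| := by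
  wlog h : q.2 ≤ p.2 generalizing p q
  · rw [abs_sub_comm, abs_sub_comm ((q.1 : ℝ) * p.2), mul_comm (q.1 : ℝ), mul_comm (q.2 : ℝ)]
    exact this hq hp (le_of_not_ge h)
  rcases h.eq_or_lt with h | h
  · rw [h, sub_self, abs_zero, zero_mul, zero_div]
    positivity
  · rw [abs_of_pos (sub_pos.2 (by exact_mod_cast h))]
    exact (hp.mul_pow_le_cross hρ hq h).trans (le_abs_self _)

lemma abs_dot_sub_le_of_add_eq (hρ : 10 ≤ ρ) (hβ : ρ / 10 ≤ β) (hc : InArc ρ c)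
    (hy₂ : InArc ρ y₂) (hy₃ : InArc ρ y₃) (hy₄ : InArc ρ y₄) (h₂ : |(y₂.2 : ℝ) - c.2| ≤ β)
    (h₃ : |(y₃.2 : ℝ) - c.2| ≤ β) (h₄ : |(y₄.2 : ℝ) - c.2| ≤ β)
    (heq : x + (c + y₂) = x' + (y₃ + y₄)) :
    |((x.1 : ℝ) - x'.1) * c.1 + (x.2 - x'.2) * c.2| ≤ 453 * β ^ 2 := by
  obtain ⟨heq₁, heq₂⟩ := Prod.ext_iff.1 heq
  simp only [Prod.fst_add, Prod.snd_add] at heq₁ heq₂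
  have hfst : (x.1 : ℝ) - x'.1 = (y₃.1 - c.1) + (y₄.1 - c.1) - (y₂.1 - c.1) := by
    rify at heq₁
    linarith
  have hsnd : (x.2 : ℝ) - x'.2 = (y₃.2 - c.2) + (y₄.2 - c.2) - (y₂.2 - c.2) := by
    rify at heq₂
    linarith
  have hρβ : ρ ^ 2 ≤ 100 * β ^ 2 := by nlinarith
  have hdot₂ := abs_le.1 (hc.abs_dot_sub_le hρ hy₂ h₂)
  have hdot₃ := abs_le.1 (hc.abs_dot_sub_le hρ hy₃ h₃)
  have hdot₄ := abs_le.1 (hc.abs_dot_sub_le hρ hy₄ h₄)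
  rw [hfst, hsnd, abs_le]
  constructor <;> linarith

lemma le_abs_cross_add (hρ : 10 ≤ ρ) (hσ : 0 < σ) (hx : InArc ρ x) (hx' : InArc ρ x')
    (hc : InArc ρ c)
    (hsep : ((x.2 : ℝ) + σ ≤ c.2 ∧ (x'.2 : ℝ) + σ ≤ c.2) ∨
      ((c.2 : ℝ) + σ ≤ x.2 ∧ (c.2 : ℝ) + σ ≤ x'.2)) :
    2 * σ * ρ ^ 3 / 5 ≤ |(c.1 : ℝ) * (x.2 + x'.2) - c.2 * (x.1 + x'.1)| := by
  have hcross {p q : ℤ × ℤ} (hp : InArc ρ p) (hq : InArc ρ q) (h : (q.2 : ℝ) + σ ≤ p.2) :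
      σ * ρ ^ 3 / 5 ≤ (q.1 : ℝ) * p.2 - q.2 * p.1 := by
    have hlt : q.2 < p.2 := by exact_mod_cast (by linarith : (q.2 : ℝ) < p.2)
    refine le_trans ?_ (hp.mul_pow_le_cross hρ hq hlt)
    gcongr
    linarith
  rcases hsep with ⟨h, h'⟩ | ⟨h, h'⟩
  · rw [abs_sub_comm]
    exact le_trans (by linarith [hcross hc hx h, hcross hc hx' h']) (le_abs_self _)
  · exact le_trans (by linarith [hcross hx hc h, hcross hx' hc h']) (le_abs_self _)

/-- The difference `x - x'` is nearly orthogonal both to `c`, by the additive relation, and to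
`x + x'`, since `x` and `x'` have nearly the same length; as these two vectors are transversal,
`x - x'` is short. -/
lemma abs_snd_sub_mul_le (hρ : 10 ≤ ρ) (hσ : 0 < σ) (hβ : ρ / 10 ≤ β) (hx : InArc ρ x)
    (hx' : InArc ρ x') (hc : InArc ρ c) (hy₂ : InArc ρ y₂) (hy₃ : InArc ρ y₃) (hy₄ : InArc ρ y₄)
    (h₂ : |(y₂.2 : ℝ) - c.2| ≤ β) (h₃ : |(y₃.2 : ℝ) - c.2| ≤ β) (h₄ : |(y₄.2 : ℝ) - c.2| ≤ β)
    (hsep : ((x.2 : ℝ) + σ ≤ c.2 ∧ (x'.2 : ℝ) + σ ≤ c.2) ∨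
      ((c.2 : ℝ) + σ ≤ x.2 ∧ (c.2 : ℝ) + σ ≤ x'.2))
    (heq : x + (c + y₂) = x' + (y₃ + y₄)) : |(x.2 : ℝ) - x'.2| * σ ≤ 4000 * β ^ 2 := by
  have hρβ : ρ ^ 2 ≤ 100 * β ^ 2 := by nlinarith
  have hdot_c := abs_dot_sub_le_of_add_eq hρ hβ hc hy₂ hy₃ hy₄ h₂ h₃ h₄ heq
  have hdot_sum :
      |((x.1 : ℝ) - x'.1) * (x.1 + x'.1) + (x.2 - x'.2) * (x.2 + x'.2)| ≤ 300 * β ^ 2 := by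
    refine le_trans (le_of_eq (congrArg _ ?_)) ((hx.abs_sq_sub_sq_le hx'.toInAnnulus).trans ?_)
    · ring
    · linarith
  have hupper := abs_snd_mul_abs_cross_le (x.1 - x'.1) (x.2 - x'.2) c.1 c.2 (x.1 + x'.1)
    (x.2 + x'.2)
  rw [abs_of_nonneg hc.fst_nonneg, abs_of_nonneg (add_nonneg hx.fst_nonneg hx'.fst_nonneg)]
    at hupper
  have hρ3 : 0 < ρ ^ 3 := by positivity
  refine le_of_mul_le_mul_left ?_ (by positivity : 0 < 2 / 5 * ρ ^ 3)
  calc 2 / 5 * ρ ^ 3 * (|(x.2 : ℝ) - x'.2| * σ)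
      = |(x.2 : ℝ) - x'.2| * (2 * σ * ρ ^ 3 / 5) := by ring
    _ ≤ |(x.2 : ℝ) - x'.2| * |(c.1 : ℝ) * (x.2 + x'.2) - c.2 * (x.1 + x'.1)| := by
        gcongr
        exact le_abs_cross_add hρ hσ hx hx' hc hsep
    _ ≤ c.1 * (300 * β ^ 2) + (x.1 + x'.1) * (453 * β ^ 2) := hupper.trans (by
        gcongr
        · exact hc.fst_nonneg
        · exact add_nonneg hx.fst_nonneg hx'.fst_nonneg)
    _ ≤ (1.01 * ρ ^ 3) * (300 * β ^ 2) + (1.01 * ρ ^ 3 + 1.01 * ρ ^ 3) * (453 * β ^ 2) := by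
        gcongr
        exacts [hc.fst_le hρ, hx.fst_le hρ, hx'.fst_le hρ]
    _ ≤ 2 / 5 * ρ ^ 3 * (4000 * β ^ 2) := by nlinarith [mul_nonneg hρ3.le (sq_nonneg β)]

end InArc

theorem isTransverse_arcCoord (hρ : 10 ≤ ρ) (hΛ : ∀ p ∈ Λ, InArc ρ p) :
    IsTransverse (arcCoord ρ) Λ 4000 := by
  intro b s hb hs X Y hX hY hsep hdiam x hx x' hx' y₁ hy₁ y₂ hy₂ y₃ hy₃ y₄ hy₄ heq
  have hρ0 : 0 < ρ := by linarith
  have hl : 0 < ρ / 10 := by positivity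
  have hsnd (p : ℤ × ℤ) : (p.2 : ℝ) = arcCoord ρ p * (ρ / 10) :=
    (div_mul_cancel₀ _ hl.ne').symm
  have hclose (z) (hz : z ∈ Y) : |(z.2 : ℝ) - y₁.2| ≤ b * (ρ / 10) := by
    rw [abs_snd_sub_eq hρ0]
    gcongr
    exact hdiam z hz y₁ hy₁
  have hsep' : ((x.2 : ℝ) + s * (ρ / 10) ≤ y₁.2 ∧ (x'.2 : ℝ) + s * (ρ / 10) ≤ y₁.2) ∨
      ((y₁.2 : ℝ) + s * (ρ / 10) ≤ x.2 ∧ (y₁.2 : ℝ) + s * (ρ / 10) ≤ x'.2) := by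
    simp only [hsnd, ← add_mul, mul_le_mul_iff_left₀ hl]
    exact hsep.imp (fun h => ⟨h x hx y₁ hy₁, h x' hx' y₁ hy₁⟩)
      fun h => ⟨h x hx y₁ hy₁, h x' hx' y₁ hy₁⟩
  have hmain := InArc.abs_snd_sub_mul_le hρ (by positivity) (le_mul_of_one_le_left hl.le hb)
    (hΛ x (hX hx)) (hΛ x' (hX hx')) (hΛ y₁ (hY hy₁)) (hΛ y₂ (hY hy₂)) (hΛ y₃ (hY hy₃))
    (hΛ y₄ (hY hy₄)) (hclose y₂ hy₂) (hclose y₃ hy₃) (hclose y₄ hy₄) hsep' heq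
  rw [abs_snd_sub_eq hρ0] at hmain
  rw [le_div_iff₀ hs]
  refine le_of_mul_le_mul_right ?_ (pow_pos hl 2)
  linarith

end Arc

section CollinearOffsets

/-- If `w`, `w + (i, m')` and `w + (d, n)` are collinear with `0 ≤ m' < n`, then `n ∣ d * m'`; these
are the possible `(d, n - m')` with `|d| ≤ n`. -/
def collinearOffsets (n : ℕ) : Finset (ℤ × ℕ) :=
  (Finset.Icc (-n : ℤ) n ×ˢ Finset.Ioc 0 n).filter fun τ => (n : ℤ) ∣ τ.1 * τ.2

lemma card_filter_dvd_Icc_le {d k : ℕ} (hd : 0 < d) (hk : k ≠ 0) :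
    ((Finset.Icc (-(d * k : ℕ) : ℤ) (d * k : ℕ)).filter fun i => (d : ℤ) ∣ i).card ≤ 3 * k := by
  have hd' : (0 : ℤ) < d := by exact_mod_cast hd
  have hsub : ((Finset.Icc (-(d * k : ℕ) : ℤ) (d * k : ℕ)).filter fun i => (d : ℤ) ∣ i) ⊆
      (Finset.Icc (-k : ℤ) k).image fun i => (d : ℤ) * i := by
    intro i hi
    obtain ⟨hi, j, rfl⟩ := Finset.mem_filter.1 hi
    rw [Finset.mem_Icc, ← abs_le] at hi
    refine Finset.mem_image_of_mem _ (Finset.mem_Icc.2 (abs_le.1 ?_))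
    rw [abs_mul, abs_of_pos hd', Nat.cast_mul] at hi
    exact le_of_mul_le_mul_left hi hd'
  refine (Finset.card_le_card hsub).trans (Finset.card_image_le.trans ?_)
  rw [Int.card_Icc]
  omega

lemma collinearOffsets_subset_biUnion (n : ℕ) :
    collinearOffsets n ⊆ n.divisors.biUnion fun d =>
      ((Finset.Icc (-n : ℤ) n).filter fun i => (d : ℤ) ∣ i) ×ˢ
        (Finset.Ioc 0 n).filter fun m => n / d ∣ m := by
  rintro ⟨i, m⟩ h
  simp only [collinearOffsets, Finset.mem_filter, Finset.mem_product, Finset.mem_Ioc] at h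
  obtain ⟨⟨hi, hm⟩, hdvd⟩ := h
  have hn : 0 < n := by omega
  simp only [Finset.mem_biUnion, Finset.mem_product, Finset.mem_filter, Finset.mem_Ioc,
    Nat.mem_divisors]
  refine ⟨n.gcd i.natAbs, ⟨Nat.gcd_dvd_left _ _, hn.ne'⟩,
    ⟨hi, Int.natCast_dvd.2 (Nat.gcd_dvd_right _ _)⟩, hm, ?_⟩
  rw [Int.natCast_dvd, Int.natAbs_mul, Int.natAbs_natCast] at hdvd
  refine (Nat.coprime_div_gcd_div_gcd (Nat.gcd_pos_of_pos_left i.natAbs hn)).dvd_of_dvd_mul_left ?_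
  rw [Nat.div_mul_right_comm (Nat.gcd_dvd_right _ _)]
  exact Nat.div_dvd_div (Nat.gcd_dvd_left _ _) hdvd

lemma card_collinearOffsets_le (n : ℕ) :
    (collinearOffsets n).card ≤ 3 * n * n.divisors.card := by
  refine (Finset.card_le_card (collinearOffsets_subset_biUnion n)).trans ?_
  rw [mul_comm]
  refine Finset.card_biUnion_le_card_mul _ _ _ fun d hd => ?_
  obtain ⟨⟨k, rfl⟩, hn⟩ := Nat.mem_divisors.1 hd
  have hd0 : 0 < d := Nat.pos_of_mem_divisors hd
  rw [Finset.card_product, Nat.Ioc_filter_dvd_card_eq_div, Nat.mul_div_cancel_left _ hd0,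
    Nat.mul_div_cancel _ (Nat.pos_of_ne_zero (right_ne_zero_of_mul hn))]
  calc _ ≤ 3 * k * d := Nat.mul_le_mul_right d
          (card_filter_dvd_Icc_le hd0 (right_ne_zero_of_mul hn))
    _ = 3 * (d * k) := by ring

lemma sum_card_divisors_le (N : ℕ) :
    ∑ n ∈ Finset.Ioc 0 N, (n.divisors.card : ℝ) ≤ N * (1 + log N) := by
  have hsum := ArithmeticFunction.sum_Ioc_sigma0_eq_sum_div N
  simp only [ArithmeticFunction.sigma_zero_apply] at hsum
  calc ∑ n ∈ Finset.Ioc 0 N, (n.divisors.card : ℝ)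
      = ∑ n ∈ Finset.Ioc 0 N, ((N / n : ℕ) : ℝ) := by exact_mod_cast hsum
    _ ≤ ∑ n ∈ Finset.Ioc 0 N, (N : ℝ) * (n : ℝ)⁻¹ :=
        Finset.sum_le_sum fun n _ => Nat.cast_div_le
    _ = N * (harmonic N : ℝ) := by
        rw [← Finset.mul_sum, harmonic_eq_sum_Icc]
        push_cast
        rfl
    _ ≤ N * (1 + log N) := by
        gcongr
        exact harmonic_le_one_add_log N

end CollinearOffsets

section OrderedCapPairs

variable {ρ : ℝ} {p q r z z' D : ℤ × ℤ} {Λ : Finset (ℤ × ℤ)}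

namespace InArc

lemma abs_dot_sub_le_of_le (hρ : 10 ≤ ρ) (hp : InArc ρ p) (hq : InArc ρ q)
    (h : |(q.2 : ℝ) - p.2| ≤ ρ / 10) :
    |(p.1 : ℝ) * (q.1 - p.1) + p.2 * (q.2 - p.2)| ≤ 2 * ρ ^ 2 :=
  (hp.abs_dot_sub_le hρ hq h).trans (by nlinarith)

/-- Twice the area of the triangle `p`, `q`, `r` is an integer smaller than `1`. -/
lemma mul_eq_mul_of_abs_snd_sub_le (hρ : 10 ≤ ρ) (hp : InArc ρ p) (hq : InArc ρ q)
    (hr : InArc ρ r) (hpq : |(q.2 : ℝ) - p.2| ≤ ρ / 10) (hpr : |(r.2 : ℝ) - p.2| ≤ ρ / 10) :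
    (q.2 - p.2) * (r.1 - p.1) = (q.1 - p.1) * (r.2 - p.2) := by
  have : 0 < ρ ^ 3 := by positivity
  have harea := abs_snd_mul_abs_cross_le p.2 p.1 (q.2 - p.2) (q.1 - p.1) (r.2 - p.2) (r.1 - p.1)
  rw [abs_of_nonneg hp.fst_nonneg, add_comm ((p.2 : ℝ) * _), add_comm ((p.2 : ℝ) * _)] at harea
  have hlt : 0.7 * ρ ^ 3 * |((q.2 : ℝ) - p.2) * (r.1 - p.1) - (q.1 - p.1) * (r.2 - p.2)| <
      0.7 * ρ ^ 3 * 1 :=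
    calc _ ≤ p.1 * |((q.2 : ℝ) - p.2) * (r.1 - p.1) - (q.1 - p.1) * (r.2 - p.2)| := by
          gcongr
          exact hp.le_fst
      _ ≤ ρ / 10 * (2 * ρ ^ 2) + ρ / 10 * (2 * ρ ^ 2) := harea.trans (by
          gcongr
          exacts [hp.abs_dot_sub_le_of_le hρ hr hpr, hp.abs_dot_sub_le_of_le hρ hq hpq])
      _ < 0.7 * ρ ^ 3 * 1 := by linarith
  have hlt_one := lt_of_mul_lt_mul_left hlt (by positivity)
  exact sub_eq_zero.1 (Int.abs_lt_one_iff.1 (by exact_mod_cast hlt_one))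

lemma abs_snd_sub_mul_le_of_add (hρ : 10 ≤ ρ) (hD : |(D.2 : ℝ)| ≤ ρ / 10) (hz : InArc ρ z)
    (hz' : InArc ρ z') (hzD : InArc ρ (z + D)) (hzD' : InArc ρ (z' + D)) :
    |(z.2 : ℝ) - z'.2| * |(D.2 : ℝ)| ≤ 25 * ρ ^ 2 := by
  have hdot {y : ℤ × ℤ} (hy : InArc ρ y) (hyD : InArc ρ (y + D)) :
      |(D.1 : ℝ) * y.1 + D.2 * y.2| ≤ 2 * ρ ^ 2 := by
    have := hy.abs_dot_sub_le_of_le hρ hyD (by simpa using hD)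
    simpa [mul_comm] using this
  refine le_of_mul_le_mul_left ?_ (by positivity : 0 < ρ ^ 3 / 5)
  calc ρ ^ 3 / 5 * (|(z.2 : ℝ) - z'.2| * |(D.2 : ℝ)|)
      = |(D.2 : ℝ)| * (|(z.2 : ℝ) - z'.2| * ρ ^ 3 / 5) := by ring
    _ ≤ |(D.2 : ℝ)| * |(z'.1 : ℝ) * z.2 - z'.2 * z.1| := by
        gcongr
        exact hz.abs_snd_sub_mul_pow_le_abs_cross hρ hz'
    _ ≤ |(z'.1 : ℝ)| * |(D.1 : ℝ) * z.1 + D.2 * z.2| +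
          |(z.1 : ℝ)| * |(D.1 : ℝ) * z'.1 + D.2 * z'.2| := abs_snd_mul_abs_cross_le ..
    _ ≤ 1.01 * ρ ^ 3 * (2 * ρ ^ 2) + 1.01 * ρ ^ 3 * (2 * ρ ^ 2) := by
        rw [abs_of_nonneg hz.fst_nonneg, abs_of_nonneg hz'.fst_nonneg]
        gcongr
        exacts [hz'.fst_le hρ, hdot hz hzD, hz.fst_le hρ, hdot hz' hzD']
    _ ≤ ρ ^ 3 / 5 * (25 * ρ ^ 2) := by nlinarith [(by positivity : 0 ≤ ρ ^ 3 * ρ ^ 2)]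

end InArc

/-- The pairs of points of a common cap whose second coordinates increase. -/
def orderedCapPairs (ρ : ℝ) (Λ : Finset (ℤ × ℤ)) : Finset ((ℤ × ℤ) × (ℤ × ℤ)) :=
  (Λ ×ˢ Λ).filter fun p => ⌊arcCoord ρ p.1⌋ = ⌊arcCoord ρ p.2⌋ ∧ p.1.2 < p.2.2

/-- `low j` is a lowest point of `Λ` in the cap with index `j`, for every cap meeting `Λ`. -/
structure IsCapMinimum (ρ : ℝ) (Λ : Finset (ℤ × ℤ)) (low : ℤ → ℤ × ℤ) : Prop where
  mem : ∀ ⦃x⦄, x ∈ Λ → low ⌊arcCoord ρ x⌋ ∈ Λ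
  floor_eq : ∀ ⦃x⦄, x ∈ Λ → ⌊arcCoord ρ (low ⌊arcCoord ρ x⌋)⌋ = ⌊arcCoord ρ x⌋
  snd_le : ∀ ⦃x⦄, x ∈ Λ → (low ⌊arcCoord ρ x⌋).2 ≤ x.2

lemma exists_isCapMinimum (ρ : ℝ) (Λ : Finset (ℤ × ℤ)) : ∃ low, IsCapMinimum ρ Λ low := by
  have hcap (j : ℤ) : ∃ w : ℤ × ℤ, ∀ x ∈ Λ, ⌊arcCoord ρ x⌋ = j →
      w ∈ Λ ∧ ⌊arcCoord ρ w⌋ = j ∧ w.2 ≤ x.2 := by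
    rcases (Λ.filter fun x => ⌊arcCoord ρ x⌋ = j).eq_empty_or_nonempty with h | h
    · exact ⟨0, fun x hx hj => absurd hj (Finset.filter_eq_empty_iff.1 h hx)⟩
    · obtain ⟨w, hw, hmin⟩ := Finset.exists_min_image _ Prod.snd h
      rw [Finset.mem_filter] at hw
      exact ⟨w, fun x hx hj => ⟨hw.1, hw.2, hmin x (Finset.mem_filter.2 ⟨hx, hj⟩)⟩⟩
  choose low hlow using hcap
  exact ⟨low, fun x hx => (hlow _ x hx rfl).1, fun x hx => (hlow _ x hx rfl).2.1,
    fun x hx => (hlow _ x hx rfl).2.2⟩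

/-- The data of a pair `p` relative to the lowest point `w` of its cap: the height of `p.2` above
`w`, together with the corresponding element of `collinearOffsets`. -/
def capOffset (ρ : ℝ) (low : ℤ → ℤ × ℤ) (p : (ℤ × ℤ) × (ℤ × ℤ)) : Σ _ : ℕ, ℤ × ℕ :=
  ⟨(p.2.2 - (low ⌊arcCoord ρ p.1⌋).2).toNat,
    p.2.1 - (low ⌊arcCoord ρ p.1⌋).1, (p.2.2 - p.1.2).toNat⟩

variable {low : ℤ → ℤ × ℤ} {x y x' y' : ℤ × ℤ}

lemma mem_orderedCapPairs :
    (x, y) ∈ orderedCapPairs ρ Λ ↔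
      x ∈ Λ ∧ y ∈ Λ ∧ ⌊arcCoord ρ x⌋ = ⌊arcCoord ρ y⌋ ∧ x.2 < y.2 := by
  simp only [orderedCapPairs, Finset.mem_filter, Finset.mem_product, and_assoc]

lemma capOffset_mem (hρ : 10 ≤ ρ) (hΛ : ∀ p ∈ Λ, InArc ρ p) (hlow : IsCapMinimum ρ Λ low)
    {p : (ℤ × ℤ) × (ℤ × ℤ)} (hp : p ∈ orderedCapPairs ρ Λ) :
    capOffset ρ low p ∈ (Finset.Ioc 0 ⌊ρ / 10⌋₊).sigma collinearOffsets := by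
  obtain ⟨x, y⟩ := p
  obtain ⟨hx, hy, hxy, hlt⟩ := mem_orderedCapPairs.1 hp
  have hw := hlow.mem hx
  have hwx := hlow.floor_eq hx
  have hle := hlow.snd_le hx
  rw [capOffset]
  generalize low ⌊arcCoord ρ x⌋ = w at hw hwx hle ⊢
  have hρ0 : 0 < ρ := by linarith
  have hyw := abs_snd_sub_le_of_floor_eq hρ0 (hxy.symm.trans hwx.symm)
  have hcol := (hΛ w hw).mul_eq_mul_of_abs_snd_sub_le hρ (hΛ y hy) (hΛ x hx) hyw
    (abs_snd_sub_le_of_floor_eq hρ0 hwx.symm)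
  have hfst := (hΛ y hy).abs_fst_sub_le hρ (hΛ w hw)
  obtain ⟨n, hn⟩ := Int.eq_ofNat_of_zero_le (sub_nonneg.2 (hle.trans hlt.le))
  obtain ⟨m, hm⟩ := Int.eq_ofNat_of_zero_le (sub_nonneg.2 hlt.le)
  rw [hn, Nat.abs_cast, abs_le] at hfst
  rw [hn] at hcol
  simp only [collinearOffsets, Finset.mem_sigma, Finset.mem_filter, Finset.mem_product,
    Finset.mem_Icc, Finset.mem_Ioc, hn, hm, Int.toNat_natCast]
  refine ⟨⟨by omega, Nat.le_floor ?_⟩, ⟨hfst, by omega, by omega⟩, ?_⟩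
  · rw [← Int.cast_sub, hn, Int.cast_natCast, Nat.abs_cast] at hyw
    exact hyw
  · rw [show (m : ℤ) = n - (x.2 - w.2) by omega, mul_sub, ← hcol]
    exact dvd_sub (dvd_mul_left _ _) (dvd_mul_right _ _)

lemma eq_of_capOffset_eq (hlow : IsCapMinimum ρ Λ low) (hp : (x, y) ∈ orderedCapPairs ρ Λ)
    {n : ℕ} {τ : ℤ × ℕ} (h : capOffset ρ low (x, y) = ⟨n, τ⟩) :
    y = low ⌊arcCoord ρ x⌋ + (τ.1, (n : ℤ)) ∧ x.2 = y.2 - τ.2 := by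
  obtain ⟨hx, -, -, hlt⟩ := mem_orderedCapPairs.1 hp
  have hle := hlow.snd_le hx
  obtain ⟨rfl, heq⟩ := Sigma.mk.inj_iff.1 h
  obtain rfl := eq_of_heq heq
  refine ⟨Prod.ext ?_ ?_, ?_⟩
  · simp
  · simp only [Prod.snd_add]
    omega
  · simp only
    omega

lemma abs_floor_sub_floor_le_of_capOffset_eq (hρ : 10 ≤ ρ) (hΛ : ∀ p ∈ Λ, InArc ρ p)
    (hlow : IsCapMinimum ρ Λ low) {n : ℕ} (hn : n ∈ Finset.Ioc 0 ⌊ρ / 10⌋₊) {τ : ℤ × ℕ}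
    (hp : (x, y) ∈ orderedCapPairs ρ Λ) (hp' : (x', y') ∈ orderedCapPairs ρ Λ)
    (h : capOffset ρ low (x, y) = ⟨n, τ⟩) (h' : capOffset ρ low (x', y') = ⟨n, τ⟩) :
    |⌊arcCoord ρ x⌋ - ⌊arcCoord ρ x'⌋| ≤ (⌈250 * (ρ / n)⌉₊ : ℤ) := by
  obtain ⟨hn0, hnρ⟩ := Finset.mem_Ioc.1 hn
  have hn0 : (0 : ℝ) < n := by exact_mod_cast hn0
  have hnρ : (n : ℝ) ≤ ρ / 10 := (Nat.le_floor_iff (by positivity)).1 hnρ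
  obtain ⟨hx, hy, -⟩ := mem_orderedCapPairs.1 hp
  obtain ⟨hx', hy', -⟩ := mem_orderedCapPairs.1 hp'
  have hsnd := InArc.abs_snd_sub_mul_le_of_add (D := (τ.1, (n : ℤ))) hρ (by simpa using hnρ)
    (hΛ _ (hlow.mem hx)) (hΛ _ (hlow.mem hx')) ((eq_of_capOffset_eq hlow hp h).1 ▸ hΛ y hy)
    ((eq_of_capOffset_eq hlow hp' h').1 ▸ hΛ y' hy')
  rw [← hlow.floor_eq hx, ← hlow.floor_eq hx']
  refine abs_floor_div_sub_floor_div_le (by positivity) ?_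
  calc _ ≤ 25 * ρ ^ 2 / n := (le_div_iff₀ hn0).2 (by simpa using hsnd)
    _ = 250 * (ρ / n) * (ρ / 10) := by ring
    _ ≤ _ := by
      gcongr
      exact_mod_cast Nat.le_ceil _

lemma injOn_floor_arcCoord_fst (hρ : 10 ≤ ρ) (hΛ : ∀ p ∈ Λ, InArc ρ p)
    (hlow : IsCapMinimum ρ Λ low) (n : ℕ) (τ : ℤ × ℕ) :
    Set.InjOn (fun p : (ℤ × ℤ) × (ℤ × ℤ) => ⌊arcCoord ρ p.1⌋)
      ((orderedCapPairs ρ Λ).filter fun p => capOffset ρ low p = ⟨n, τ⟩) := by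
  rintro ⟨x, y⟩ hp ⟨x', y'⟩ hp' (h : ⌊arcCoord ρ x⌋ = ⌊arcCoord ρ x'⌋)
  obtain ⟨hp, hoffset⟩ := Finset.mem_filter.1 hp
  obtain ⟨hp', hoffset'⟩ := Finset.mem_filter.1 hp'
  obtain ⟨hy, hxy⟩ := eq_of_capOffset_eq hlow hp hoffset
  obtain ⟨hy', hxy'⟩ := eq_of_capOffset_eq hlow hp' hoffset'
  obtain rfl : y = y' := by rw [hy, hy', h]
  exact Prod.ext ((hΛ x (mem_orderedCapPairs.1 hp).1).eq_of_snd_eq hρ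
    (hΛ x' (mem_orderedCapPairs.1 hp').1) (hxy.trans hxy'.symm)) rfl

lemma card_filter_capOffset_eq_le (hρ : 10 ≤ ρ) (hΛ : ∀ p ∈ Λ, InArc ρ p)
    (hlow : IsCapMinimum ρ Λ low) {n : ℕ} (hn : n ∈ Finset.Ioc 0 ⌊ρ / 10⌋₊) (τ : ℤ × ℕ) :
    (((orderedCapPairs ρ Λ).filter fun p => capOffset ρ low p = ⟨n, τ⟩).card : ℝ) ≤
      503 * (ρ / n) := by
  rcases ((orderedCapPairs ρ Λ).filter fun p =>
    capOffset ρ low p = ⟨n, τ⟩).eq_empty_or_nonempty with hempty | ⟨⟨x₀, y₀⟩, h₀⟩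
  · rw [hempty, Finset.card_empty, Nat.cast_zero]
    positivity
  obtain ⟨hp₀, hoffset₀⟩ := Finset.mem_filter.1 h₀
  have hcard := card_le_of_forall_abs_sub_le (k := ⌊arcCoord ρ x₀⌋) (Finset.forall_mem_image.2
    fun (p : (ℤ × ℤ) × (ℤ × ℤ)) hp => abs_floor_sub_floor_le_of_capOffset_eq hρ hΛ hlow hn
      (Finset.mem_filter.1 hp).1 hp₀ (Finset.mem_filter.1 hp).2 hoffset₀)
  rw [Finset.card_image_of_injOn (injOn_floor_arcCoord_fst hρ hΛ hlow n τ)] at hcard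
  obtain ⟨hn0, hnρ⟩ := Finset.mem_Ioc.1 hn
  have hn0 : (0 : ℝ) < n := by exact_mod_cast hn0
  have hnρ : (n : ℝ) ≤ ρ / 10 := (Nat.le_floor_iff (by positivity)).1 hnρ
  have hone : 1 ≤ ρ / n := (one_le_div₀ hn0).2 (by linarith)
  have hceil := Nat.ceil_lt_add_one (by positivity : 0 ≤ 250 * (ρ / n))
  refine (Nat.cast_le.2 hcard).trans ?_
  push_cast
  linarith

lemma card_orderedCapPairs_le (hρ : 10 ≤ ρ) (hΛ : ∀ p ∈ Λ, InArc ρ p) :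
    ((orderedCapPairs ρ Λ).card : ℝ) ≤ 151 * ρ ^ 2 * (1 + log ρ) := by
  obtain ⟨low, hlow⟩ := exists_isCapMinimum ρ Λ
  have hNρ : (⌊ρ / 10⌋₊ : ℝ) ≤ ρ / 10 := Nat.floor_le (by positivity)
  have hN : (1 : ℝ) ≤ ⌊ρ / 10⌋₊ := by
    exact_mod_cast Nat.le_floor (by norm_num; linarith : ((1 : ℕ) : ℝ) ≤ ρ / 10)
  rw [Finset.card_eq_sum_card_fiberwise fun p hp => capOffset_mem hρ hΛ hlow hp,
    Finset.sum_sigma, Nat.cast_sum]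
  calc _ ≤ ∑ n ∈ Finset.Ioc 0 ⌊ρ / 10⌋₊, 1509 * ρ * (n.divisors.card : ℝ) := by
        refine Finset.sum_le_sum fun n hn => ?_
        have hn0 : (n : ℝ) ≠ 0 := by exact_mod_cast (Finset.mem_Ioc.1 hn).1.ne'
        rw [Nat.cast_sum]
        calc _ ≤ ∑ _τ ∈ collinearOffsets n, 503 * (ρ / n) :=
              Finset.sum_le_sum fun τ _ => card_filter_capOffset_eq_le hρ hΛ hlow hn τ
          _ ≤ (3 * n * n.divisors.card : ℕ) * (503 * (ρ / n)) := by
              rw [Finset.sum_const, nsmul_eq_mul]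
              gcongr
              exact card_collinearOffsets_le n
          _ = 1509 * ρ * (n.divisors.card : ℝ) := by
              push_cast
              field_simp
              ring
    _ = 1509 * ρ * ∑ n ∈ Finset.Ioc 0 ⌊ρ / 10⌋₊, (n.divisors.card : ℝ) := by
        rw [Finset.mul_sum]
    _ ≤ 1509 * ρ * (⌊ρ / 10⌋₊ * (1 + log ⌊ρ / 10⌋₊)) := by
        gcongr
        exact sum_card_divisors_le _
    _ ≤ 1509 * ρ * (ρ / 10 * (1 + log ρ)) := by
        have : 0 ≤ log ⌊ρ / 10⌋₊ := log_nonneg hN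
        gcongr
        linarith
    _ ≤ 151 * ρ ^ 2 * (1 + log ρ) := by
        have : 0 ≤ log ρ := log_nonneg (by linarith)
        nlinarith [(by positivity : 0 ≤ ρ ^ 2 * (1 + log ρ))]

lemma diamLE_arcCoord (hρ : 10 ≤ ρ) (hΛ : ∀ p ∈ Λ, InArc ρ p) :
    DiamLE (arcCoord ρ) Λ (20 * ρ ^ 2) := by
  intro x hx y hy
  have hdist := abs_snd_sub_eq (by linarith : 0 < ρ) x y
  refine le_of_mul_le_mul_right ?_ (by positivity : 0 < ρ / 10)
  linarith [abs_sub (x.2 : ℝ) y.2, (hΛ x hx).abs_snd_le_pow hρ, (hΛ y hy).abs_snd_le_pow hρ]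

lemma card_le_card_image_add_card_orderedCapPairs (hρ : 10 ≤ ρ) (hΛ : ∀ p ∈ Λ, InArc ρ p) :
    Λ.card ≤ (Λ.image fun x => ⌊arcCoord ρ x⌋).card + (orderedCapPairs ρ Λ).card := by
  obtain ⟨low, hlow⟩ := exists_isCapMinimum ρ Λ
  rw [← Finset.card_filter_add_card_filter_not (s := Λ) fun x => low ⌊arcCoord ρ x⌋ = x]
  refine add_le_add ?_ ?_
  · refine Finset.card_le_card_of_injOn (fun x => ⌊arcCoord ρ x⌋)
      (fun x hx => Finset.mem_coe.2 (Finset.mem_image_of_mem _ (Finset.mem_filter.1 hx).1)) ?_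
    intro x hx y hy (h : ⌊arcCoord ρ x⌋ = ⌊arcCoord ρ y⌋)
    rw [← (Finset.mem_filter.1 hx).2, h, (Finset.mem_filter.1 hy).2]
  · refine Finset.card_le_card_of_injOn (fun x => (low ⌊arcCoord ρ x⌋, x)) ?_
      fun x _ y _ h => congrArg Prod.snd h
    intro x hx
    obtain ⟨hx, hne⟩ := Finset.mem_filter.1 hx
    refine mem_orderedCapPairs.2 ⟨hlow.mem hx, hx, hlow.floor_eq hx, ?_⟩
    exact lt_of_le_of_ne (hlow.snd_le hx) fun h =>
      hne ((hΛ _ (hlow.mem hx)).eq_of_snd_eq hρ (hΛ x hx) h)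

lemma capPairCount_arcCoord_le_card_add (hρ : 10 ≤ ρ) (hΛ : ∀ p ∈ Λ, InArc ρ p) :
    capPairCount (arcCoord ρ) Λ ≤ Λ.card + 2 * (orderedCapPairs ρ Λ).card := by
  have hsub : ((Λ ×ˢ Λ).filter fun p => ⌊arcCoord ρ p.1⌋ = ⌊arcCoord ρ p.2⌋) ⊆
      Λ.image (fun x => (x, x)) ∪
        (orderedCapPairs ρ Λ ∪ (orderedCapPairs ρ Λ).image Prod.swap) := by
    rintro ⟨x, y⟩ hp
    obtain ⟨hxy, hfloor⟩ := Finset.mem_filter.1 hp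
    obtain ⟨hx, hy⟩ := Finset.mem_product.1 hxy
    rw [Finset.mem_union, Finset.mem_union]
    rcases lt_trichotomy x.2 y.2 with h | h | h
    · exact Or.inr (Or.inl (mem_orderedCapPairs.2 ⟨hx, hy, hfloor, h⟩))
    · obtain rfl := (hΛ x hx).eq_of_snd_eq hρ (hΛ y hy) h
      exact Or.inl (Finset.mem_image_of_mem _ hx)
    · exact Or.inr (Or.inr (Finset.mem_image_of_mem Prod.swap
        (mem_orderedCapPairs.2 ⟨hy, hx, hfloor.symm, h⟩)))
  rw [capPairCount]
  norm_cast
  refine (Finset.card_le_card hsub).trans ((Finset.card_union_le _ _).trans ?_)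
  refine (add_le_add Finset.card_image_le ((Finset.card_union_le _ _).trans
    (Nat.add_le_add_left Finset.card_image_le _))).trans (by omega)

lemma capPairCount_arcCoord_le (hρ : 10 ≤ ρ) (hΛ : ∀ p ∈ Λ, InArc ρ p) :
    capPairCount (arcCoord ρ) Λ ≤ 500 * ρ ^ 2 * (1 + log ρ) := by
  have hcaps : ((Λ.image fun x => ⌊arcCoord ρ x⌋).card : ℝ) ≤ 2 * (20 * ρ ^ 2) + 3 := by
    simpa using (diamLE_arcCoord hρ hΛ).card_image_floor_div_le (by positivity) one_pos
  have hcard : (Λ.card : ℝ) ≤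
      (Λ.image fun x => ⌊arcCoord ρ x⌋).card + (orderedCapPairs ρ Λ).card := by
    exact_mod_cast card_le_card_image_add_card_orderedCapPairs hρ hΛ
  have : 0 ≤ log ρ := log_nonneg (by linarith)
  linarith [card_orderedCapPairs_le hρ hΛ, capPairCount_arcCoord_le_card_add hρ hΛ,
    (by positivity : 0 ≤ ρ ^ 2 * log ρ), (by nlinarith : 100 ≤ ρ ^ 2)]

end OrderedCapPairs

section FourArcs

lemma energy_image {E F : Type*} [AddCommMonoid E] [AddCommMonoid F] {φ : E →+ F}
    (hφ : Function.Injective φ) (k : ℕ) (Λ : Set E) : energy k (φ '' Λ) = energy k Λ := by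
  have hsum (f g : Fin k → E) : ∑ i, φ (f i) = ∑ i, φ (g i) ↔ ∑ i, f i = ∑ i, g i := by
    rw [← map_sum, ← map_sum, hφ.eq_iff]
  refine (Nat.card_eq_of_bijective (fun fg => ⟨(φ ∘ fg.1.1, φ ∘ fg.1.2),
    fun i => Set.mem_image_of_mem φ (fg.2.1 i), fun i => Set.mem_image_of_mem φ (fg.2.2.1 i),
    (hsum _ _).2 fg.2.2.2⟩) ⟨?_, ?_⟩).symm
  · intro fg fg' h
    obtain ⟨h₁, h₂⟩ := Prod.ext_iff.1 (Subtype.ext_iff.1 h)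
    exact Subtype.ext (Prod.ext (hφ.comp_left h₁) (hφ.comp_left h₂))
  · rintro ⟨⟨f, g⟩, hf, hg, hfg⟩
    obtain ⟨f', hf'⟩ := Classical.axiomOfChoice hf
    obtain ⟨g', hg'⟩ := Classical.axiomOfChoice hg
    obtain rfl : φ ∘ f' = f := funext fun i => (hf' i).2
    obtain rfl : φ ∘ g' = g := funext fun i => (hg' i).2
    exact ⟨⟨(f', g'), fun i => (hf' i).1, fun i => (hg' i).1, (hsum f' g').1 hfg⟩, rfl⟩

section Filter

variable {G : Type*} [AddCommGroup G]

lemma tripleEnergy_image [DecidableEq G] {φ : G →+ G} (hφ : Function.Injective φ) (A : Finset G) :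
    tripleEnergy (A.image φ) = tripleEnergy A := by
  rw [tripleEnergy_eq_energy, tripleEnergy_eq_energy, Finset.coe_image, energy_image hφ]

lemma tripleEnergy_le_two_mul_mixedEnergy_filter_add (A : Finset G) (p : G → Prop)
    [DecidablePred p] :
    tripleEnergy A ≤ 2 * (mixedEnergy (A.filter p) A + mixedEnergy (A.filter fun x => ¬p x) A) := by
  set X := A.filter p
  set Y := A.filter fun x => ¬p x
  have hA : indicatorSum X + indicatorSum Y = indicatorSum A :=
    indicatorSum_add_indicatorSum_filter_not A p
  have hcube : diffRep A ^ 3 = diffRep X * diffRep A ^ 2 +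
      indicatorSum X * reflect (indicatorSum Y) * diffRep A ^ 2 +
      indicatorSum Y * reflect (indicatorSum X) * diffRep A ^ 2 + diffRep Y * diffRep A ^ 2 := by
    have hdiff : diffRep A =
        (indicatorSum X + indicatorSum Y) * reflect (indicatorSum X + indicatorSum Y) := by
      rw [hA, diffRep]
    rw [pow_succ' _ 2]
    nth_rw 1 [hdiff]
    rw [map_add, diffRep, diffRep, diffRep]
    ring
  rw [tripleEnergy, hcube, map_add, map_add, map_add, ← mixedEnergy, ← mixedEnergy]
  linarith [constCoeff_cross_le X Y A, constCoeff_cross_le Y X A]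

lemma tripleEnergy_le_of_le_four_mul_mixedEnergy {X A : Finset G}
    (h : tripleEnergy A ≤ 4 * mixedEnergy X A) : tripleEnergy A ≤ 64 * tripleEnergy X := by
  rcases (tripleEnergy_nonneg A).eq_or_lt with h0 | h0
  · rw [← h0]
    exact mul_nonneg (by norm_num) (tripleEnergy_nonneg X)
  refine le_of_mul_le_mul_right ?_ (pow_pos h0 2)
  calc tripleEnergy A * tripleEnergy A ^ 2 = tripleEnergy A ^ 3 := by ring
    _ ≤ (4 * mixedEnergy X A) ^ 3 := by gcongr
    _ = 64 * mixedEnergy X A ^ 3 := by ring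
    _ ≤ 64 * (tripleEnergy X * tripleEnergy A ^ 2) := by
        gcongr
        exact mixedEnergy_pow_three_le X A
    _ = 64 * tripleEnergy X * tripleEnergy A ^ 2 := by ring

lemma tripleEnergy_le_of_filter {A : Finset G} {E : ℝ} (p : G → Prop) [DecidablePred p]
    (hp : tripleEnergy (A.filter p) ≤ E) (hnp : tripleEnergy (A.filter fun x => ¬p x) ≤ E) :
    tripleEnergy A ≤ 64 * E := by
  have h := tripleEnergy_le_two_mul_mixedEnergy_filter_add A p
  rcases le_total (mixedEnergy (A.filter p) A) (mixedEnergy (A.filter fun x => ¬p x) A)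
    with hle | hle
  · linarith [tripleEnergy_le_of_le_four_mul_mixedEnergy (X := A.filter fun x => ¬p x)
      (h.trans (by linarith))]
  · linarith [tripleEnergy_le_of_le_four_mul_mixedEnergy (X := A.filter p)
      (h.trans (by linarith))]

end Filter

variable {ρ E ε : ℝ} {p : ℤ × ℤ} {A : Finset (ℤ × ℤ)}

namespace InAnnulus

lemma neg (h : InAnnulus ρ p) : InAnnulus ρ (-p) :=
  ⟨by simpa using h.le_sq, by simpa using h.sq_le⟩

lemma swap (h : InAnnulus ρ p) : InAnnulus ρ p.swap :=
  ⟨by simpa [add_comm] using h.le_sq, by simpa [add_comm] using h.sq_le⟩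

end InAnnulus

lemma tripleEnergy_le_of_abs_snd_le_abs_fst
    (hE : ∀ S : Finset (ℤ × ℤ), (∀ p ∈ S, InArc ρ p) → tripleEnergy S ≤ E)
    (hA : ∀ p ∈ A, InAnnulus ρ p) (h : ∀ p ∈ A, |p.2| ≤ |p.1|) : tripleEnergy A ≤ 64 * E := by
  refine tripleEnergy_le_of_filter (fun p => 0 ≤ p.1) (hE _ fun p hp => ?_) ?_
  · obtain ⟨hp, hpos⟩ := Finset.mem_filter.1 hp
    have hle := h p hp
    rw [abs_of_nonneg hpos] at hle
    exact ⟨hA p hp, by exact_mod_cast hle⟩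
  · rw [← tripleEnergy_image (φ := negAddMonoidHom) neg_injective]
    refine hE _ (Finset.forall_mem_image.2 fun p hp => ?_)
    obtain ⟨hp, hneg⟩ := Finset.mem_filter.1 hp
    have hle := h p hp
    rw [abs_of_neg (not_le.1 hneg), ← abs_neg] at hle
    exact ⟨(hA p hp).neg, by exact_mod_cast hle⟩

lemma tripleEnergy_le_of_forall_inArc
    (hE : ∀ S : Finset (ℤ × ℤ), (∀ p ∈ S, InArc ρ p) → tripleEnergy S ≤ E)
    (hA : ∀ p ∈ A, InAnnulus ρ p) : tripleEnergy A ≤ 64 * (64 * E) := by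
  refine tripleEnergy_le_of_filter (fun p => |p.2| ≤ |p.1|) ?_ ?_
  · exact tripleEnergy_le_of_abs_snd_le_abs_fst hE
      (fun p hp => hA p (Finset.mem_filter.1 hp).1) fun p hp => (Finset.mem_filter.1 hp).2
  · rw [← tripleEnergy_image (φ := (AddEquiv.prodComm : ℤ × ℤ ≃+ ℤ × ℤ).toAddMonoidHom)
      AddEquiv.prodComm.injective]
    refine tripleEnergy_le_of_abs_snd_le_abs_fst hE (Finset.forall_mem_image.2 fun p hp => ?_)
      (Finset.forall_mem_image.2 fun p hp => ?_)
    · exact (hA p (Finset.mem_filter.1 hp).1).swap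
    · exact (not_le.1 (Finset.mem_filter.1 hp).2).le

theorem exists_tripleEnergy_le_of_inAnnulus (hε : 0 < ε) :
    ∃ C : ℝ, 0 < C ∧ ∀ ρ : ℝ, 10 ≤ ρ → ∀ A : Finset (ℤ × ℤ), (∀ p ∈ A, InAnnulus ρ p) →
      tripleEnergy A ≤ C * (20 * ρ ^ 2) ^ ε * (500 * ρ ^ 2 * (1 + log ρ)) ^ 3 := by
  obtain ⟨C, hC, hdec⟩ := exists_decouples (ℤ × ℤ) hε (by norm_num : (1 : ℝ) ≤ 4000)
  refine ⟨4096 * C, by positivity, fun ρ hρ A hA => ?_⟩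
  refine (tripleEnergy_le_of_forall_inArc (E := C * (20 * ρ ^ 2) ^ ε *
    (500 * ρ ^ 2 * (1 + log ρ)) ^ 3) (fun S hS => ?_) hA).trans (by linarith)
  refine (hdec _ S (isTransverse_arcCoord hρ hS) subset_rfl (by nlinarith)
    (diamLE_arcCoord hρ hS)).trans ?_
  gcongr
  · exact capPairCount_nonneg ..
  · exact capPairCount_arcCoord_le hρ hS

end FourArcs

section LowerBound

lemma sq_add_sq_pos_of_isCoprime {a b : ℤ} (hab : IsCoprime a b) :
    0 < (a : ℝ) ^ 2 + (b : ℝ) ^ 2 := by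
  exact_mod_cast hab.sq_add_sq_ne_zero.symm.lt_of_le (by positivity : 0 ≤ a ^ 2 + b ^ 2)

lemma exists_dot_eq_le_cross {a b : ℤ} (hab : IsCoprime a b) (m : ℤ) (s : ℝ) :
    ∃ p : ℤ × ℤ, (a * p.1 + b * p.2 : ℝ) = m ∧ s ≤ (a * p.2 - b * p.1 : ℝ) ∧
      (a * p.2 - b * p.1 : ℝ) ≤ s + ((a : ℝ) ^ 2 + (b : ℝ) ^ 2) := by
  have hQ_pos := sq_add_sq_pos_of_isCoprime hab
  obtain ⟨u, v, huv⟩ := hab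
  have huv' : (u * a + v * b : ℝ) = 1 := by exact_mod_cast huv
  set Q : ℝ := (a : ℝ) ^ 2 + (b : ℝ) ^ 2
  set k : ℝ := a * (v * m) - b * (u * m)
  have hcross (j : ℤ) : (a * (v * m + j * a) - b * (u * m - j * b) : ℝ) = k + j * Q := by ring
  refine ⟨(u * m - ⌈(s - k) / Q⌉ * b, v * m + ⌈(s - k) / Q⌉ * a), ?_, ?_⟩ <;> push_cast
  · linear_combination (m : ℝ) * huv'
  · rw [hcross]
    have hle := Int.le_ceil ((s - k) / Q)
    have hlt := Int.ceil_lt_add_one ((s - k) / Q)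
    rw [div_le_iff₀ hQ_pos] at hle
    rw [← sub_lt_iff_lt_add, lt_div_iff₀ hQ_pos] at hlt
    constructor <;> linarith

/-- The point `p` lies close to the ray through `(a, b)`: its inner and cross products with
`(a, b)` lie in `[0, D]` and `[0, K]`. -/
structure NearRay (D K a b : ℝ) (p : ℤ × ℤ) : Prop where
  dot_nonneg : 0 ≤ a * p.1 + b * p.2
  dot_le : a * p.1 + b * p.2 ≤ D
  cross_nonneg : 0 ≤ a * p.2 - b * p.1
  cross_le : a * p.2 - b * p.1 ≤ K

namespace NearRay

variable {D K D' K' a b c d : ℝ} {p : ℤ × ℤ}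

lemma mono (h : NearRay D K a b p) (hD : D ≤ D') (hK : K ≤ K') : NearRay D' K' a b p :=
  ⟨h.dot_nonneg, h.dot_le.trans hD, h.cross_nonneg, h.cross_le.trans hK⟩

lemma abs_cross_lt_one (h : NearRay D K a b p) (h' : NearRay D K c d p)
    (hp : D * K < (p.1 : ℝ) ^ 2 + (p.2 : ℝ) ^ 2) : |a * d - b * c| < 1 := by
  have hD : 0 ≤ D := h.dot_nonneg.trans h.dot_le
  have : (a * d - b * c) * ((p.1 : ℝ) ^ 2 + (p.2 : ℝ) ^ 2) =
      (c * p.1 + d * p.2) * (a * p.2 - b * p.1) - (a * p.1 + b * p.2) * (c * p.2 - d * p.1) := by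
    ring
  have h₁ := mul_le_mul h'.dot_le h.cross_le h.cross_nonneg hD
  have h₂ := mul_le_mul h.dot_le h'.cross_le h'.cross_nonneg hD
  have h₃ := mul_nonneg h'.dot_nonneg h.cross_nonneg
  have h₄ := mul_nonneg h.dot_nonneg h'.cross_nonneg
  rw [abs_lt]
  constructor <;> nlinarith

end NearRay

lemma exists_nearRay_sq_mem_Icc {a b : ℤ} (hab : IsCoprime a b) {T Q : ℝ} (hT : 0 ≤ T)
    (hQ : (a : ℝ) ^ 2 + (b : ℝ) ^ 2 = Q) :
    ∃ p : ℤ × ℤ, NearRay √(T * Q) (√(2 * √(T * Q)) + Q) a b p ∧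
      (p.1 : ℝ) ^ 2 + (p.2 : ℝ) ^ 2 ∈ Set.Icc T (T + 2 * √(2 * √(T * Q)) + Q) := by
  have hQ_pos : 0 < Q := hQ ▸ sq_add_sq_pos_of_isCoprime hab
  set r := √(T * Q)
  have hr : r ^ 2 = T * Q := sq_sqrt (by positivity)
  have hfloor : (0 : ℝ) ≤ ⌊r⌋ := by exact_mod_cast Int.floor_nonneg.2 (sqrt_nonneg _)
  have hfloor_le := Int.floor_le r
  have hlt_floor := Int.lt_floor_add_one r
  set s := √(r ^ 2 - ⌊r⌋ ^ 2)
  have hs : s ^ 2 = r ^ 2 - ⌊r⌋ ^ 2 := sq_sqrt (by nlinarith)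
  have hs_nonneg : 0 ≤ s := sqrt_nonneg _
  have hs_le : s ≤ √(2 * r) := sqrt_le_sqrt (by nlinarith)
  obtain ⟨p, hdot, hle_cross, hcross_le⟩ := exists_dot_eq_le_cross hab ⌊r⌋ s
  rw [hQ] at hcross_le
  refine ⟨p, ⟨?_, ?_, hs_nonneg.trans hle_cross, by linarith⟩, ?_⟩
  · rwa [hdot]
  · rwa [hdot]
  have hsq : Q * ((p.1 : ℝ) ^ 2 + (p.2 : ℝ) ^ 2) = ⌊r⌋ ^ 2 + (a * p.2 - b * p.1 : ℝ) ^ 2 := by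
    rw [← hdot, ← hQ]
    ring
  constructor <;> refine le_of_mul_le_mul_left ?_ hQ_pos <;> rw [hsq]
  · have : s ^ 2 ≤ (a * p.2 - b * p.1 : ℝ) ^ 2 := by gcongr
    linarith
  · have : (a * p.2 - b * p.1 : ℝ) ^ 2 ≤ (s + Q) ^ 2 := by
      have := hs_nonneg.trans hle_cross
      gcongr
    nlinarith

lemma exists_nearRay_sq_le {ρ : ℝ} {a b : ℤ} (hab : IsCoprime a b)
    (hle : (a : ℝ) ^ 2 + (b : ℝ) ^ 2 ≤ ρ ^ 2 / 18) :
    ∃ p : ℤ × ℤ, NearRay (ρ ^ 4 / 4) (ρ ^ 2) a b p ∧ ρ ^ 6 ≤ (p.1 : ℝ) ^ 2 + (p.2 : ℝ) ^ 2 ∧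
      (p.1 : ℝ) ^ 2 + (p.2 : ℝ) ^ 2 ≤ ρ ^ 6 + 2 * ρ ^ 2 := by
  obtain ⟨p, hp, hle_sq, hsq_le⟩ := exists_nearRay_sq_mem_Icc hab (by positivity : 0 ≤ ρ ^ 6) rfl
  set Q := (a : ℝ) ^ 2 + (b : ℝ) ^ 2
  have hdot : √(ρ ^ 6 * Q) ≤ ρ ^ 4 / 4 := by
    refine sqrt_le_iff.2 ⟨by positivity, ?_⟩
    calc ρ ^ 6 * Q ≤ ρ ^ 6 * (ρ ^ 2 / 18) := by gcongr
      _ ≤ (ρ ^ 4 / 4) ^ 2 := by nlinarith [(by positivity : 0 ≤ ρ ^ 8)]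
  have hcross : √(2 * √(ρ ^ 6 * Q)) ≤ 3 / 4 * ρ ^ 2 := by
    refine sqrt_le_iff.2 ⟨by positivity, ?_⟩
    nlinarith [(by positivity : 0 ≤ ρ ^ 4)]
  have := sq_nonneg ρ
  exact ⟨p, hp.mono hdot (by linarith), hle_sq, by linarith⟩

lemma prod_ext_of_coprime_of_mul_eq_mul {a b c d : ℕ} (hab : a.Coprime b) (hcd : c.Coprime d)
    (h : a * d = b * c) : (a, b) = (c, d) :=
  Prod.ext
    (Nat.dvd_antisymm (hab.dvd_of_dvd_mul_left ⟨d, h.symm⟩)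
      (hcd.dvd_of_dvd_mul_right ⟨b, by rw [h, mul_comm]⟩))
    (Nat.dvd_antisymm (hab.symm.dvd_of_dvd_mul_left ⟨c, h⟩)
      (hcd.symm.dvd_of_dvd_mul_right ⟨a, by rw [← h, mul_comm]⟩))

/-- The pairs of coprime positive integers up to `N`, one for each primitive direction. -/
def coprimePairs (N : ℕ) : Finset (ℕ × ℕ) :=
  (Finset.Ioc 0 N ×ˢ Finset.Ioc 0 N).filter fun p => p.1.Coprime p.2

lemma sum_Ioc_one_inv_sq_le (N : ℕ) : ∑ d ∈ Finset.Ioc 1 N, ((d : ℝ) ^ 2)⁻¹ ≤ 3 / 4 := by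
  rcases lt_or_ge N 2 with hN | hN
  · rw [Finset.Ioc_eq_empty (by omega), Finset.sum_empty]
    norm_num
  · rw [← Finset.sum_Ioc_consecutive _ one_le_two hN, show Finset.Ioc 1 2 = {2} from rfl,
      Finset.sum_singleton]
    have htail := sum_Ioc_inv_sq_le_sub (α := ℝ) two_ne_zero hN
    have hinv : (0 : ℝ) ≤ (N : ℝ)⁻¹ := by positivity
    norm_num at htail ⊢
    linarith

lemma card_filter_not_coprime_le (N : ℕ) :
    (((Finset.Ioc 0 N ×ˢ Finset.Ioc 0 N).filter fun p => ¬p.1.Coprime p.2).card : ℝ) ≤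
      3 / 4 * N ^ 2 := by
  have hsub : ((Finset.Ioc 0 N ×ˢ Finset.Ioc 0 N).filter fun p => ¬p.1.Coprime p.2) ⊆
      (Finset.Ioc 1 N).biUnion fun d =>
        ((Finset.Ioc 0 N).filter (d ∣ ·)) ×ˢ ((Finset.Ioc 0 N).filter (d ∣ ·)) := by
    rintro ⟨a, b⟩ hp
    simp only [Finset.mem_filter, Finset.mem_product, Finset.mem_Ioc, Nat.coprime_iff_gcd_eq_one,
      Finset.mem_biUnion] at hp ⊢
    obtain ⟨⟨⟨ha, haN⟩, hb⟩, hgcd⟩ := hp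
    have hgcd_pos := Nat.gcd_pos_of_pos_left b ha
    exact ⟨a.gcd b, ⟨by omega, (Nat.gcd_le_left b ha).trans haN⟩,
      ⟨⟨ha, haN⟩, Nat.gcd_dvd_left a b⟩, hb, Nat.gcd_dvd_right a b⟩
  have hcard := (Finset.card_le_card hsub).trans Finset.card_biUnion_le
  simp only [Finset.card_product, Nat.Ioc_filter_dvd_card_eq_div] at hcard
  calc (_ : ℝ) ≤ ∑ d ∈ Finset.Ioc 1 N, (((N / d : ℕ) : ℝ) * (N / d : ℕ)) := by exact_mod_cast hcard
    _ ≤ ∑ d ∈ Finset.Ioc 1 N, (N : ℝ) / d * (N / d) := by gcongr <;> exact Nat.cast_div_le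
    _ = (∑ d ∈ Finset.Ioc 1 N, ((d : ℝ) ^ 2)⁻¹) * N ^ 2 := by
        rw [Finset.sum_mul]
        exact Finset.sum_congr rfl fun d _ => by ring
    _ ≤ 3 / 4 * N ^ 2 := by
        gcongr
        exact sum_Ioc_one_inv_sq_le N

lemma sq_div_four_le_card_coprimePairs (N : ℕ) : (N : ℝ) ^ 2 / 4 ≤ (coprimePairs N).card := by
  have hcard := Finset.card_filter_add_card_filter_not (s := Finset.Ioc 0 N ×ˢ Finset.Ioc 0 N)
    (fun p => p.1.Coprime p.2)
  rw [Finset.card_product, Nat.card_Ioc, Nat.sub_zero, ← sq, ← coprimePairs,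
    ← @Nat.cast_inj ℝ] at hcard
  push_cast at hcard
  linarith [card_filter_not_coprime_le N]

lemma sq_div_le_card_of_forall_mem {ρ : ℝ} (hρ : 12 ≤ ρ) {A : Finset (ℤ × ℤ)}
    (hA : ∀ p : ℤ × ℤ, ρ ^ 6 ≤ (p.1 : ℝ) ^ 2 + (p.2 : ℝ) ^ 2 →
      (p.1 : ℝ) ^ 2 + (p.2 : ℝ) ^ 2 ≤ ρ ^ 6 + 2 * ρ ^ 2 → p ∈ A) : ρ ^ 2 / 576 ≤ A.card := by
  set N := ⌊ρ / 6⌋₊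
  have hN_le : (N : ℝ) ≤ ρ / 6 := Nat.floor_le (by positivity)
  have hle_N : ρ / 12 ≤ N := by linarith [Nat.lt_floor_add_one (ρ / 6)]
  have hcard : (coprimePairs N).card ≤ A.card := by
    refine Finset.card_le_card_of_forall_subsingleton (fun w p =>
      NearRay (ρ ^ 4 / 4) (ρ ^ 2) w.1 w.2 p ∧ ρ ^ 6 ≤ (p.1 : ℝ) ^ 2 + (p.2 : ℝ) ^ 2)
      (fun w hw => ?_) ?_
    · simp only [coprimePairs, Finset.mem_filter, Finset.mem_product, Finset.mem_Ioc] at hw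
      obtain ⟨⟨⟨-, ha⟩, -, hb⟩, hcop⟩ := hw
      have ha' : (w.1 : ℝ) ≤ ρ / 6 := (Nat.cast_le.2 ha).trans hN_le
      have hb' : (w.2 : ℝ) ≤ ρ / 6 := (Nat.cast_le.2 hb).trans hN_le
      obtain ⟨p, hray, hle, hge⟩ := exists_nearRay_sq_le (ρ := ρ)
        (Nat.isCoprime_iff_coprime.2 hcop) (by
          have := pow_le_pow_left₀ w.1.cast_nonneg ha' 2
          have := pow_le_pow_left₀ w.2.cast_nonneg hb' 2
          push_cast
          linarith)
      exact ⟨p, hA p hle hge, by simpa using hray, hle⟩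
    · rintro p - w ⟨hw, hray, hp⟩ w' ⟨hw', hray', -⟩
      have hcross := hray.abs_cross_lt_one hray' (lt_of_lt_of_le
        (by linarith [(by positivity : 0 < ρ ^ 6)]) hp)
      have hzero : (w.1 * w'.2 - w.2 * w'.1 : ℤ) = 0 :=
        Int.abs_lt_one_iff.1 (by exact_mod_cast hcross)
      exact prod_ext_of_coprime_of_mul_eq_mul (Finset.mem_filter.1 hw).2 (Finset.mem_filter.1 hw').2
        (by exact_mod_cast sub_eq_zero.1 hzero)
  calc ρ ^ 2 / 576 = (ρ / 12) ^ 2 / 4 := by ring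
    _ ≤ (N : ℝ) ^ 2 / 4 := by gcongr
    _ ≤ (coprimePairs N).card := sq_div_four_le_card_coprimePairs N
    _ ≤ A.card := by exact_mod_cast hcard

end LowerBound

section Annulus

lemma exists_rpow_mul_log_pow_le {ε : ℝ} (hε : 0 < ε) :
    ∃ C > (0 : ℝ), ∃ δ > (0 : ℝ), ∀ ρ : ℝ, 1 ≤ ρ →
      (20 * ρ ^ 2) ^ δ * (500 * ρ ^ 2 * (1 + log ρ)) ^ 3 ≤ C * (ρ ^ 2) ^ (3 + ε) := by
  obtain ⟨δ, hδ, rfl⟩ : ∃ δ : ℝ, 0 < δ ∧ 5 / 2 * δ = ε := ⟨2 / 5 * ε, by positivity, by ring⟩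
  refine ⟨20 ^ δ * (500 * (1 + 1 / δ)) ^ 3, by positivity, δ, hδ, fun ρ hρ => ?_⟩
  have hρ₀ : 0 ≤ ρ := by linarith
  have hlog : 1 + log ρ ≤ (1 + 1 / δ) * ρ ^ δ := by
    rw [add_mul, one_mul, one_div_mul_eq_div]
    exact add_le_add (one_le_rpow hρ hδ.le) (log_le_rpow_div hρ₀ hδ)
  have hlog_nonneg := log_nonneg hρ
  have hsq : (ρ ^ 2) ^ δ = (ρ ^ δ) ^ 2 := (rpow_pow_comm hρ₀ δ 2).symm
  have hexp : ρ ^ 6 * (ρ ^ δ) ^ 5 = (ρ ^ 2) ^ (3 + 5 / 2 * δ) := by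
    simp only [← rpow_natCast, ← rpow_mul hρ₀]
    rw [← rpow_add (by linarith)]
    congr 1
    push_cast
    ring
  calc (20 * ρ ^ 2) ^ δ * (500 * ρ ^ 2 * (1 + log ρ)) ^ 3
      ≤ (20 * ρ ^ 2) ^ δ * (500 * ρ ^ 2 * ((1 + 1 / δ) * ρ ^ δ)) ^ 3 := by gcongr
    _ = 20 ^ δ * (500 * (1 + 1 / δ)) ^ 3 * (ρ ^ 6 * (ρ ^ δ) ^ 5) := by
        rw [mul_rpow (by norm_num) (by positivity), hsq]
        ring
    _ = 20 ^ δ * (500 * (1 + 1 / δ)) ^ 3 * (ρ ^ 2) ^ (3 + 5 / 2 * δ) := by rw [hexp]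

lemma annulusLattice_subset_Icc {R : ℝ} {n : ℕ} (hn : R + R ^ (-(1 : ℝ) / 3) ≤ n) :
    annulusLattice R ⊆ (Finset.Icc (-(n : ℤ), -(n : ℤ)) (n, n) : Finset (ℤ × ℤ)) := by
  rintro ξ ⟨-, hξ⟩
  have h_fst : |(ξ.1 : ℝ)| ≤ n :=
    (abs_le_sqrt (le_add_of_nonneg_right (sq_nonneg _))).trans (hξ.trans hn)
  have h_snd : |(ξ.2 : ℝ)| ≤ n :=
    (abs_le_sqrt (le_add_of_nonneg_left (sq_nonneg _))).trans (hξ.trans hn)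
  obtain ⟨h₁, h₁'⟩ := abs_le.1 (by exact_mod_cast h_fst : |ξ.1| ≤ n)
  obtain ⟨h₂, h₂'⟩ := abs_le.1 (by exact_mod_cast h_snd : |ξ.2| ≤ n)
  exact Finset.mem_coe.2 (Finset.mem_Icc.2 ⟨⟨h₁, h₂⟩, h₁', h₂'⟩)

lemma finite_annulusLattice (R : ℝ) : (annulusLattice R).Finite :=
  (Finset.finite_toSet _).subset (annulusLattice_subset_Icc (Nat.le_ceil _))

lemma exists_ncard_annulusLattice_le (R₀ : ℝ) :
    ∃ K : ℕ, ∀ R, 1 ≤ R → R ≤ R₀ → (annulusLattice R).ncard ≤ K := by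
  refine ⟨(Finset.Icc (-(⌈R₀ + 1⌉₊ : ℤ), -(⌈R₀ + 1⌉₊ : ℤ)) (⌈R₀ + 1⌉₊, ⌈R₀ + 1⌉₊)).card,
    fun R hR hR₀ => ?_⟩
  have hrpow : R ^ (-(1 : ℝ) / 3) ≤ 1 := rpow_le_one_of_one_le_of_nonpos hR (by norm_num)
  rw [← Set.ncard_coe_finset]
  exact Set.ncard_le_ncard
    (annulusLattice_subset_Icc ((add_le_add hR₀ hrpow).trans (Nat.le_ceil _)))

lemma mem_annulusLattice_pow_three {ρ : ℝ} (hρ : 0 < ρ) {ξ : ℤ × ℤ} :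
    ξ ∈ annulusLattice (ρ ^ 3) ↔ ρ ^ 6 ≤ (ξ.1 : ℝ) ^ 2 + (ξ.2 : ℝ) ^ 2 ∧
      (ξ.1 : ℝ) ^ 2 + (ξ.2 : ℝ) ^ 2 ≤ ρ ^ 6 + 2 * ρ ^ 2 + ρ⁻¹ ^ 2 := by
  have hinv : (ρ ^ 3) ^ (-(1 : ℝ) / 3) = ρ⁻¹ := by
    rw [← rpow_natCast, ← rpow_mul hρ.le, ← rpow_neg_one]
    norm_num
  have hsq : (ρ ^ 3 + ρ⁻¹) ^ 2 = ρ ^ 6 + 2 * ρ ^ 2 + ρ⁻¹ ^ 2 := by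
    field_simp
    ring
  rw [annulusLattice, Set.mem_ofPred_eq, hinv, le_sqrt (by positivity),
    sqrt_le_left (by positivity), hsq, ← pow_mul]
  positivity

lemma tripleEnergy_le_of_card_le {G : Type*} [AddCommGroup G] {A : Finset G} {K : ℕ} {ε : ℝ}
    (hε : 0 ≤ ε) (hK : A.card ≤ K) : tripleEnergy A ≤ K ^ 3 * (A.card : ℝ) ^ (3 + ε) := by
  refine (tripleEnergy_le_card_pow A).trans ?_
  rcases A.eq_empty_or_nonempty with rfl | hA
  · rw [Finset.card_empty, Nat.cast_zero, zero_pow (by norm_num)]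
    positivity
  · have hone : (1 : ℝ) ≤ A.card := by exact_mod_cast hA.card_pos
    calc (A.card : ℝ) ^ 6 = (A.card : ℝ) ^ 3 * (A.card : ℝ) ^ (3 : ℝ) := by
          rw [rpow_ofNat]
          ring
      _ ≤ K ^ 3 * (A.card : ℝ) ^ (3 + ε) := by
          gcongr
          linarith

lemma exists_tripleEnergy_le_of_coe_eq_annulusLattice {ε : ℝ} (hε : 0 < ε) :
    ∃ C > (0 : ℝ), ∀ ρ : ℝ, 12 ≤ ρ → ∀ A : Finset (ℤ × ℤ), A = annulusLattice (ρ ^ 3) →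
      tripleEnergy A ≤ C * (A.card : ℝ) ^ (3 + ε) := by
  obtain ⟨C, hC, δ, hδ, hgrowth⟩ := exists_rpow_mul_log_pow_le hε
  obtain ⟨C', hC', hupper⟩ := exists_tripleEnergy_le_of_inAnnulus hδ
  refine ⟨C' * (C * 576 ^ (3 + ε)), by positivity, fun ρ hρ A hA => ?_⟩
  have hmem (ξ : ℤ × ℤ) : ξ ∈ A ↔ ρ ^ 6 ≤ (ξ.1 : ℝ) ^ 2 + (ξ.2 : ℝ) ^ 2 ∧
      (ξ.1 : ℝ) ^ 2 + (ξ.2 : ℝ) ^ 2 ≤ ρ ^ 6 + 2 * ρ ^ 2 + ρ⁻¹ ^ 2 := by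
    rw [← Finset.mem_coe, hA, mem_annulusLattice_pow_three (by linarith)]
  have hinv : ρ⁻¹ ^ 2 ≤ ρ ^ 2 := by
    gcongr
    exact (inv_le_one_of_one_le₀ (by linarith)).trans (by linarith)
  have hannulus : ∀ p ∈ A, InAnnulus ρ p := fun p hp =>
    ⟨((hmem p).1 hp).1, by linarith [((hmem p).1 hp).2]⟩
  have hcard : ρ ^ 2 / 576 ≤ A.card := sq_div_le_card_of_forall_mem hρ fun p hle hge =>
    (hmem p).2 ⟨hle, hge.trans (le_add_of_nonneg_right (sq_nonneg _))⟩
  calc tripleEnergy A ≤ C' * (20 * ρ ^ 2) ^ δ * (500 * ρ ^ 2 * (1 + log ρ)) ^ 3 :=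
        hupper ρ (by linarith) A hannulus
    _ ≤ C' * (C * (ρ ^ 2) ^ (3 + ε)) := by
        rw [mul_assoc]
        exact mul_le_mul_of_nonneg_left (hgrowth ρ (by linarith)) hC'.le
    _ ≤ C' * (C * (576 * A.card) ^ (3 + ε)) := by
        gcongr
        linarith
    _ = C' * (C * 576 ^ (3 + ε)) * (A.card : ℝ) ^ (3 + ε) := by
        rw [mul_rpow (by norm_num) (Nat.cast_nonneg _)]
        ring

end Annulus

theorem additive_energy_annulus :
    ∀ ε > (0 : ℝ), ∃ C > (0 : ℝ), ∀ R : ℝ, 1 < R →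
      (energy 3 (annulusLattice R) : ℝ) ≤
        C * ((annulusLattice R).ncard : ℝ) ^ ((3 : ℝ) + ε) := by
  intro ε hε
  obtain ⟨C, hC, hlarge⟩ := exists_tripleEnergy_le_of_coe_eq_annulusLattice hε
  obtain ⟨K, hK⟩ := exists_ncard_annulusLattice_le (12 ^ 3)
  refine ⟨max C (K ^ 3), lt_max_of_lt_left hC, fun R hR => ?_⟩
  obtain ⟨ρ, hρ, rfl⟩ : ∃ ρ : ℝ, 0 ≤ ρ ∧ ρ ^ 3 = R :=
    ⟨R ^ (3⁻¹ : ℝ), by positivity, rpow_inv_natCast_pow (by linarith) three_ne_zero⟩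
  lift annulusLattice (ρ ^ 3) to Finset (ℤ × ℤ) using finite_annulusLattice _ with A hA
  rw [Set.ncard_coe_finset, ← tripleEnergy_eq_energy]
  rcases le_total 12 ρ with h12 | h12
  · exact (hlarge ρ h12 A hA).trans (by gcongr; exact le_max_left _ _)
  · have hcard : A.card ≤ K := by
      rw [← Set.ncard_coe_finset, hA]
      exact hK _ hR.le (by gcongr)
    exact (tripleEnergy_le_of_card_le hε.le hcard).trans (by gcongr; exact le_max_right _ _)

end
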